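/- arXiv:1311.3437 — 4 statements merged into one kernel-verified Lean document; each statement's English description precedes it below -/
import Mathlib

section
/- Let ω ∈ ℝ^k have rationally independent components and let u: 𝕋^k → U be continuous such that D_ω u and D_ω² u exist and are continuous on 𝕋^k. Then the function x(t) := u(tω) is a classical solution of the Euler–Lagrange equations ẍ + Γ_x(ẋ,ẋ) = g(x)⁻¹ W'_x(tω, x) for all t ∈ ℝ if and only if for every continuously differentiable h: 𝕋^k → ℝ^m one has ∫_{𝕋^k} [ ( g(u(φ)) D_ω u(φ) , D_ω h(φ) + Γ_{u(φ)}(D_ω u(φ), h(φ)) ) + ( W'_x(φ, u(φ)) , h(φ) ) ] dφ = 0. (This is the single-chart form of Proposition 1 of the paper, characterizing classical quasiperiodic solutions by a weak variational identity on the torus.) -/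
/-!
Write `v = D_ω u`, `a = D_ω² u` and let `G = g(u) (a + Γ_u(v,v)) - W'_x(φ,u)` be the
Euler–Lagrange residual with its index lowered by the metric. Since `g` is invertible, the
Euler–Lagrange equations along `x(t) = u(tω)` say that `G` vanishes on the orbit `{tω}`.

Compatibility of the Christoffel map with the metric (`christoffelLower_compat`) gives, for a `C¹`
test function `h`, the pointwise identity
`(g v, D_ω h + Γ(v,h)) + (W', h) = D_ω (g v, h) - (G, h)`.
A derivative in direction `ω` integrates to zero over the torus (`setIntegral_torusBox_deriv`), so
the weak identity says exactly that `∫ (G, h) = 0` for all `h`.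

If the weak identity holds, testing with periodic bumps gives `G = 0` everywhere
(`torus_eq_zero_of_integral_mul`). Conversely, if `G` vanishes on the orbit, then so does the
continuous periodic function `(G, h)`, and rational independence forces its integral to be zero
(`setIntegral_eq_zero_of_orbit`): by Stone–Weierstrass it is uniformly close to a trigonometric
polynomial, and such a polynomial is a constant plus a derivative `D_ω q`.
-/

open MeasureTheory Real Set

/-- Directional derivative `D_ω f(φ) := (d/dt)|_{t=0} f(φ + tω)`. -/
noncomputable def dirDeriv {k : ℕ} {E : Type*} [NormedAddCommGroup E] [NormedSpace ℝ E]
    (ω : Fin k → ℝ) (f : (Fin k → ℝ) → E) (φ : Fin k → ℝ) : E :=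
  deriv (fun t : ℝ => f (φ + t • ω)) 0

/-- A function on `ℝ^k` represents a function on the torus `𝕋^k = ℝ^k/(2πℤ^k)`
if it is `2π`-periodic in every coordinate. -/
def TorusPer {k : ℕ} {E : Type*} (f : (Fin k → ℝ) → E) : Prop :=
  ∀ (φ : Fin k → ℝ) (n : Fin k → ℤ), f (φ + fun i => 2 * Real.pi * (n i : ℝ)) = f φ

/-- Fundamental domain `[0,2π]^k` of the torus `𝕋^k`. -/
def torusBox (k : ℕ) : Set (Fin k → ℝ) := Set.Icc 0 (fun _ => 2 * Real.pi)

/-- Euclidean dot product on `ℝ^n`. -/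
def dotp {n : ℕ} (a b : Fin n → ℝ) : ℝ := ∑ i, a i * b i

/-- Euclidean partial derivative `∂_j f(x)`. -/
noncomputable def pd {m : ℕ} (f : (Fin m → ℝ) → ℝ) (x : Fin m → ℝ) (j : Fin m) : ℝ :=
  fderiv ℝ f x (Pi.single j 1)

/-- The Christoffel bilinear map of a metric tensor `g`:
`Γ_x(a,b)^i = ½ Σ_{j,k,l} (g(x)⁻¹)^{il}(∂_j g_{lk}(x) + ∂_k g_{jl}(x) − ∂_l g_{jk}(x)) a^j b^k`. -/
noncomputable def christoffel {m : ℕ} (g : (Fin m → ℝ) → Matrix (Fin m) (Fin m) ℝ)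
    (x a b : Fin m → ℝ) : Fin m → ℝ :=
  fun i => (1 / 2) * ∑ l, (g x)⁻¹ i l *
    ∑ j, ∑ k, (pd (fun y => g y l k) x j + pd (fun y => g y j l) x k
      - pd (fun y => g y j k) x l) * a j * b k

/-- Euclidean partial gradient `W'_x(φ,x)` of a force function `W(φ,·)`. -/
noncomputable def gradW {k m : ℕ} (W : (Fin k → ℝ) → (Fin m → ℝ) → ℝ)
    (φ : Fin k → ℝ) (x : Fin m → ℝ) : Fin m → ℝ :=
  fun i => fderiv ℝ (W φ) x (Pi.single i 1)

/-! ### Derivatives along `ω` and integration over the torus -/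

/-- A derivative in direction `ω` known at `t = 0` for every base point gives the derivative of
`s ↦ F (φ + sω)` at every time. -/
theorem hasDerivAt_along {k : ℕ} {E : Type*} [NormedAddCommGroup E] [NormedSpace ℝ E]
    {ω : Fin k → ℝ} {F D : (Fin k → ℝ) → E}
    (hF : ∀ φ, HasDerivAt (fun t : ℝ => F (φ + t • ω)) (D φ) 0) (φ : Fin k → ℝ) (t : ℝ) :
    HasDerivAt (fun s : ℝ => F (φ + s • ω)) (D (φ + t • ω)) t := by
  have h2 := HasDerivAt.scomp_of_eq t (hF (φ + t • ω)) ((hasDerivAt_id t).sub_const t) (by simp)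
  rw [one_smul] at h2
  refine h2.congr_of_eventuallyEq (Filter.Eventually.of_forall fun s => ?_)
  simp only [Function.comp, id]
  congr 1
  module

theorem torusPer_of_hasDerivAt {k : ℕ} {E : Type*} [NormedAddCommGroup E] [NormedSpace ℝ E]
    {ω : Fin k → ℝ} {F D : (Fin k → ℝ) → E} (hper : TorusPer F)
    (hF : ∀ φ, HasDerivAt (fun t : ℝ => F (φ + t • ω)) (D φ) 0) : TorusPer D := by
  intro φ n
  refine (hF _).unique ((hF φ).congr_of_eventuallyEq (Filter.Eventually.of_forall fun t => ?_))
  have := hper (φ + t • ω) n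
  simp only
  rw [← this]
  congr 1
  abel

/-- Translation invariance of the integral over the torus. The half-open box is a fundamental
domain for the lattice `2πℤ^k`, and so is each of its translates; the closed box differs from it by
a null set. -/
theorem setIntegral_torusBox_add {k : ℕ} {E : Type*} [NormedAddCommGroup E] [NormedSpace ℝ E]
    {f : (Fin k → ℝ) → E} (hf : TorusPer f) (a : Fin k → ℝ) :
    ∫ φ in torusBox k, f (φ + a) = ∫ φ in torusBox k, f φ := by
  have hpi : (2 * π) ≠ 0 := by positivity
  let b : Module.Basis (Fin k) ℝ (Fin k → ℝ) :=
    (Pi.basisFun ℝ (Fin k)).unitsSMul (fun _ => Units.mk0 (2 * π) hpi)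
  have hbv : ∀ i, b i = (2 * π) • Pi.single i (1 : ℝ) := by
    intro i
    simp [b, Module.Basis.unitsSMul_apply, Units.smul_def]
  have hrep : ∀ x i, b.repr x i = x i / (2 * π) := by
    intro x i
    simp [b, Module.Basis.repr_unitsSMul, Units.smul_def, div_eq_inv_mul]
  have hD := ZSpan.isAddFundamentalDomain b (volume : Measure (Fin k → ℝ))
  have hset : ZSpan.fundamentalDomain b = Set.pi univ (fun _ => Ico 0 (2 * π)) := by
    ext x
    simp only [ZSpan.mem_fundamentalDomain, hrep, mem_pi, mem_univ, true_imp_iff, mem_Ico]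
    refine forall_congr' fun i => ?_
    rw [div_lt_one (by positivity), le_div_iff₀ (by positivity), zero_mul]
  have hae : ZSpan.fundamentalDomain b =ᵐ[volume] torusBox k := by
    rw [hset, torusBox]
    exact Measure.univ_pi_Ico_ae_eq_Icc (μ := fun _ : Fin k => (volume : Measure ℝ))
  have hinv : ∀ (γ : Submodule.span ℤ (Set.range b)) (x : Fin k → ℝ), f (γ +ᵥ x) = f x := by
    rintro ⟨γ, hγ⟩ x
    obtain ⟨c, hc⟩ := (Submodule.mem_span_range_iff_exists_fun ℤ).1 hγ
    have : γ = fun i => 2 * π * (c i : ℝ) := by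
      rw [← hc]
      ext i
      simp [hbv, Finset.sum_apply, Pi.single_apply, mul_comm]
    rw [← hf x c, Submodule.vadd_def, vadd_eq_add, add_comm]
    simp only [this]
  have : VAddInvariantMeasure (Submodule.span ℤ (Set.range b)) (Fin k → ℝ) volume :=
    inferInstanceAs <| VAddInvariantMeasure (Submodule.span ℤ (Set.range b)).toAddSubgroup
      (Fin k → ℝ) volume
  have hD2 := hD.vadd_of_comm a
  have h1 := hD2.setIntegral_eq hD hinv
  rw [setIntegral_congr_set hae] at h1
  rw [← h1, ← setIntegral_congr_set hae]
  have := (measurePreserving_add_left (volume : Measure (Fin k → ℝ)) a).setIntegral_image_emb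
    (measurableEmbedding_addLeft a) f (ZSpan.fundamentalDomain b)
  simp only [add_comm a] at this
  rw [← this, ← Set.image_vadd]
  simp only [vadd_eq_add, add_comm a]

theorem isCompact_torusBox (k : ℕ) : IsCompact (torusBox k) := isCompact_Icc

/-- A directional derivative of a periodic function has integral zero over the torus: integrate
`F (φ + ω) - F φ = ∫₀¹ D_ω F (φ + sω) ds` over the box and exchange the integrals; by translation
invariance the left side gives `0` and the right side `∫ D_ω F`. -/
theorem setIntegral_torusBox_deriv {k : ℕ} {E : Type*} [NormedAddCommGroup E] [NormedSpace ℝ E]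
    [CompleteSpace E] {ω : Fin k → ℝ} {F D : (Fin k → ℝ) → E} (hper : TorusPer F)
    (hFc : Continuous F) (hDc : Continuous D)
    (hF : ∀ φ, HasDerivAt (fun t : ℝ => F (φ + t • ω)) (D φ) 0) :
    ∫ φ in torusBox k, D φ = 0 := by
  have hftc : ∀ φ, ∫ s in (0 : ℝ)..1, D (φ + s • ω) = F (φ + ω) - F φ := by
    intro φ
    rw [intervalIntegral.integral_eq_sub_of_hasDerivAt
      (fun t _ => hasDerivAt_along hF φ t)]
    · simp
    · exact (by fun_prop : Continuous fun s : ℝ => D (φ + s • ω)).intervalIntegrable _ _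
  have h0 : ∫ φ in torusBox k, (F (φ + ω) - F φ) = 0 := by
    rw [integral_sub, setIntegral_torusBox_add hper, sub_self]
    · exact (by fun_prop : Continuous fun φ => F (φ + ω)).continuousOn.integrableOn_compact
        (isCompact_torusBox k)
    · exact hFc.continuousOn.integrableOn_compact (isCompact_torusBox k)
  simp_rw [← hftc, intervalIntegral.integral_of_le zero_le_one] at h0
  rw [integral_integral_swap] at h0
  · simp_rw [setIntegral_torusBox_add (torusPer_of_hasDerivAt hper hF)] at h0
    simpa using h0
  · rw [Measure.prod_restrict]
    have hc : Continuous (Function.uncurry fun (φ : Fin k → ℝ) (s : ℝ) => D (φ + s • ω)) := by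
      fun_prop
    exact (hc.continuousOn.integrableOn_compact
      ((isCompact_torusBox k).prod (isCompact_Icc (a := (0 : ℝ)) (b := 1)))).mono_set
      (Set.prod_mono le_rfl Ioc_subset_Icc_self)

/-! ### The fundamental lemma of the calculus of variations on the torus -/

/-- If `cos x` is larger than `cos δ`, then `x` lies within `δ` of `2πℤ`. -/
theorem abs_lt_of_cos_lt {x δ : ℝ} (hδ0 : 0 < δ) (h : cos δ < cos x) :
    |x - 2 * π * (round (x / (2 * π)) : ℝ)| < δ := by
  set n := round (x / (2 * π)) with hn
  have hpi : 0 < 2 * π := by positivity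
  have h1 : |x - 2 * π * (n : ℝ)| ≤ π := by
    have h2 := abs_sub_round (x / (2 * π))
    have h3 : x - 2 * π * (n : ℝ) = (2 * π) * (x / (2 * π) - n) := by field_simp
    rw [h3, abs_mul, abs_of_pos hpi]
    calc 2 * π * |x / (2 * π) - n| ≤ 2 * π * (1 / 2) := by gcongr
      _ = π := by ring
  by_contra! hcon
  have h4 := Real.cos_le_cos_of_nonneg_of_le_pi hδ0.le h1 hcon
  rw [Real.cos_abs, mul_comm (2 * π), Real.cos_sub_int_mul_two_pi] at h4
  linarith

/-- If `f θ > 0`, then `f` has a positive integral against the periodic bump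
`∏ i, smoothTransition (cos (φ i - θ i) - cos δ)`, which is supported near `θ + 2πℤ^k`. -/
theorem torus_nonpos_of_integral_mul {k : ℕ} {f : (Fin k → ℝ) → ℝ} (hper : TorusPer f)
    (hf : Continuous f)
    (hint : ∀ h : (Fin k → ℝ) → ℝ, TorusPer h → ContDiff ℝ 1 h →
      ∫ φ in torusBox k, f φ * h φ = 0) (θ : Fin k → ℝ) : f θ ≤ 0 := by
  by_contra! hpos
  obtain ⟨δ₀, hδ₀, hball⟩ := Metric.eventually_nhds_iff.1
    (hf.continuousAt.eventually (lt_mem_nhds hpos))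
  obtain ⟨δ, hδ0, hδπ, hδδ⟩ : ∃ δ, 0 < δ ∧ δ ≤ π ∧ δ ≤ δ₀ :=
    ⟨min δ₀ π, lt_min hδ₀ pi_pos, min_le_right _ _, min_le_left _ _⟩
  set h : (Fin k → ℝ) → ℝ := fun φ => ∏ i, smoothTransition (cos (φ i - θ i) - cos δ) with hh
  have hhper : TorusPer h := by
    intro φ n
    simp only [hh, Pi.add_apply]
    refine Finset.prod_congr rfl fun i _ => ?_
    rw [show φ i + 2 * π * (n i : ℝ) - θ i = φ i - θ i + (n i : ℝ) * (2 * π) by ring,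
      Real.cos_add_int_mul_two_pi]
  have hhC : ContDiff ℝ 1 h := by
    refine contDiff_prod fun i _ => ?_
    refine (smoothTransition.contDiff (n := 1)).comp ?_
    exact (Real.contDiff_cos.comp ((contDiff_apply ℝ ℝ i).sub contDiff_const)).sub contDiff_const
  have hh0 : ∀ φ, 0 ≤ h φ := fun φ => Finset.prod_nonneg fun i _ => smoothTransition.nonneg _
  have hhθ : 0 < h θ := by
    refine Finset.prod_pos fun i _ => smoothTransition.pos_of_pos ?_
    rw [sub_self, sub_pos]
    exact Real.cos_lt_cos_of_nonneg_of_le_pi le_rfl hδπ hδ0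
  have hfh : ∀ φ, 0 ≤ f φ * h φ := by
    intro φ
    by_cases h0 : h φ = 0
    · simp [h0]
    refine mul_nonneg (le_of_lt ?_) (hh0 φ)
    rw [← hper φ fun i => -round ((φ i - θ i) / (2 * π))]
    refine hball (lt_of_lt_of_le ((dist_pi_lt_iff hδ0).2 fun i => ?_) hδδ)
    have h1 := Finset.prod_ne_zero_iff.1 h0 i (Finset.mem_univ i)
    rw [Ne, smoothTransition.zero_iff_nonpos, not_le, sub_pos] at h1
    have h2 := abs_lt_of_cos_lt hδ0 h1
    rw [Real.dist_eq]
    convert h2 using 2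
    simp only [Pi.add_apply]
    push_cast
    ring
  have hper2 : TorusPer fun φ => f φ * h φ := fun φ n => by simp only [hper φ n, hhper φ n]
  have hc : Continuous fun φ => f φ * h φ := hf.mul hhC.continuous
  -- Recentre the box at `θ`, so that the bump sits in the interior of the domain of integration.
  have hI := setIntegral_torusBox_add hper2 (θ - fun _ => π)
  rw [hint h hhper hhC] at hI
  refine hI.not_gt ((setIntegral_pos_iff_support_of_nonneg_ae
    (Filter.Eventually.of_forall fun φ => hfh _) ?_).2 ?_)
  · exact (by fun_prop : Continuous fun φ : Fin k → ℝ =>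
      f (φ + (θ - fun _ => π)) * h (φ + (θ - fun _ => π))).continuousOn.integrableOn_compact
        (isCompact_torusBox k)
  · have ho : IsOpen ((Function.support fun φ : Fin k → ℝ =>
        f (φ + (θ - fun _ => π)) * h (φ + (θ - fun _ => π))) ∩
          Set.pi univ fun _ : Fin k => Ioo 0 (2 * π)) :=
      ((by fun_prop : Continuous fun φ : Fin k → ℝ =>
        f (φ + (θ - fun _ => π)) * h (φ + (θ - fun _ => π))).isOpen_support).inter
        (isOpen_set_pi finite_univ fun _ _ => isOpen_Ioo)
    refine (ho.measure_pos volume ⟨fun _ => π, ?_, ?_⟩).trans_le (measure_mono ?_)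
    · simpa using ⟨hpos.ne', hhθ.ne'⟩
    · intro i _
      exact ⟨pi_pos, by linarith [pi_pos]⟩
    · refine inter_subset_inter_right _ ?_
      intro x hx
      exact ⟨fun i => (hx i trivial).1.le, fun i => (hx i trivial).2.le⟩

/-- The fundamental lemma of the calculus of variations on the torus. -/
theorem torus_eq_zero_of_integral_mul {k : ℕ} {f : (Fin k → ℝ) → ℝ} (hper : TorusPer f)
    (hf : Continuous f)
    (hint : ∀ h : (Fin k → ℝ) → ℝ, TorusPer h → ContDiff ℝ 1 h →
      ∫ φ in torusBox k, f φ * h φ = 0) (θ : Fin k → ℝ) : f θ = 0 := by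
  refine le_antisymm (torus_nonpos_of_integral_mul hper hf hint θ) ?_
  have := torus_nonpos_of_integral_mul (f := fun φ => -f φ) (fun φ n => by simp only [hper φ n])
    hf.neg (fun h h1 h2 => by simp only [neg_mul, integral_neg, hint h h1 h2, neg_zero]) θ
  linarith

/-! ### Functions vanishing on a dense orbit -/

/-- The covering map `ℝ^k → (ℝ/ℤ)^k`, `φ ↦ φ / 2π mod 1`. -/
noncomputable def toUnitTorus {k : ℕ} (φ : Fin k → ℝ) : UnitAddTorus (Fin k) :=
  fun i => ((φ i / (2 * π) : ℝ) : UnitAddCircle)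

theorem continuous_toUnitTorus {k : ℕ} :
    Continuous (toUnitTorus : (Fin k → ℝ) → UnitAddTorus (Fin k)) := by
  refine continuous_pi fun i => ?_
  exact (AddCircle.continuous_mk' 1).comp ((continuous_apply i).div_const _)

theorem toUnitTorus_surjective {k : ℕ} :
    Function.Surjective (toUnitTorus : (Fin k → ℝ) → UnitAddTorus (Fin k)) := by
  intro x
  choose y hy using fun i => QuotientAddGroup.mk_surjective (x i)
  refine ⟨fun i => 2 * π * y i, funext fun i => ?_⟩
  rw [← hy i]
  have : 2 * π * y i / (2 * π) = y i := by field_simp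
  simp only [toUnitTorus, this]

theorem toUnitTorus_isQuotientMap {k : ℕ} :
    Topology.IsQuotientMap (toUnitTorus : (Fin k → ℝ) → UnitAddTorus (Fin k)) := by
  have h1 : IsOpenQuotientMap (fun x : ℝ => (x : UnitAddCircle)) :=
    QuotientAddGroup.isOpenQuotientMap_mk
  have h2 : IsOpenQuotientMap (fun x : ℝ => ((x / (2 * π) : ℝ) : UnitAddCircle)) :=
    h1.comp (Homeomorph.mulRight₀ (2 * π)⁻¹ (by positivity)).isOpenQuotientMap
  exact (IsOpenQuotientMap.piMap fun _ : Fin k => h2).isQuotientMap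

/-- A continuous periodic function descends to the quotient torus. -/
theorem exists_lift_unitTorus {k : ℕ} {f : (Fin k → ℝ) → ℝ} (hper : TorusPer f)
    (hf : Continuous f) : ∃ F : C(UnitAddTorus (Fin k), ℂ), ∀ φ, F (toUnitTorus φ) = (f φ : ℂ) := by
  have hfac : ∀ a b : Fin k → ℝ, toUnitTorus a = toUnitTorus b → f a = f b := by
    intro a b hab
    have : ∀ i, ∃ n : ℤ, a i = b i + 2 * π * (n : ℝ) := by
      intro i
      have h := congrFun hab i
      simp only [toUnitTorus] at h
      rw [QuotientAddGroup.eq] at h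
      obtain ⟨n, hn⟩ := AddSubgroup.mem_zmultiples_iff.1 h
      refine ⟨-n, ?_⟩
      simp at hn
      push_cast
      rw [hn]
      field_simp
      ring
    choose n hn using this
    rw [show a = b + fun i => 2 * π * (n i : ℝ) from funext hn, hper]
  refine ⟨⟨fun x => ((f (Function.surjInv toUnitTorus_surjective x) : ℝ) : ℂ), ?_⟩, fun φ => ?_⟩
  · rw [toUnitTorus_isQuotientMap.continuous_iff]
    convert Complex.continuous_ofReal.comp hf using 1
    funext φ
    exact congrArg _ (hfac _ _ (Function.surjInv_eq toUnitTorus_surjective _))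
  · exact congrArg Complex.ofReal (hfac _ _ (Function.surjInv_eq toUnitTorus_surjective _))

theorem mFourier_toUnitTorus {k : ℕ} (n : Fin k → ℤ) (φ : Fin k → ℝ) :
    UnitAddTorus.mFourier n (toUnitTorus φ) =
      Complex.exp (Complex.I * ((∑ i, n i * φ i : ℝ) : ℂ)) := by
  simp only [UnitAddTorus.mFourier, ContinuousMap.coe_mk, toUnitTorus, fourier_coe_apply]
  rw [← Complex.exp_sum]
  congr 1
  push_cast
  rw [Finset.mul_sum]
  refine Finset.sum_congr rfl fun i _ => ?_
  have : (π : ℂ) ≠ 0 := by exact_mod_cast pi_ne_zero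
  field_simp

/-- For rationally independent `ω`, every trigonometric polynomial is a constant plus a derivative
`D_ω q`: the monomial with frequency vector `n ≠ 0` is `D_ω` of itself divided by `i (n · ω) ≠ 0`. -/
theorem exists_primitive_of_mem_span {k : ℕ} {ω : Fin k → ℝ} (hω : LinearIndependent ℚ ω)
    {p : C(UnitAddTorus (Fin k), ℂ)}
    (hp : p ∈ Submodule.span ℂ (range (UnitAddTorus.mFourier (d := Fin k)))) :
    ∃ (c : ℂ) (q : C(UnitAddTorus (Fin k), ℂ)), ∀ φ : Fin k → ℝ,
      HasDerivAt (fun t : ℝ => q (toUnitTorus (φ + t • ω))) (p (toUnitTorus φ) - c) 0 := by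
  induction hp using Submodule.span_induction with
  | mem x hx =>
    obtain ⟨n, rfl⟩ := hx
    by_cases hn : n = 0
    · refine ⟨1, 0, fun φ => ?_⟩
      subst hn
      simpa [UnitAddTorus.mFourier_zero] using hasDerivAt_const (0 : ℝ) (0 : ℂ)
    · have hne : (∑ i, n i * ω i : ℝ) ≠ 0 := by
        intro h0
        apply hn
        have := Fintype.linearIndependent_iff.1 hω (fun i => (n i : ℚ)) (by
          rw [← h0]
          refine Finset.sum_congr rfl fun i _ => ?_
          rw [Rat.smul_def]
          push_cast
          rfl)
        funext i
        exact_mod_cast this i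
      set ν : ℝ := ∑ i, n i * ω i with hν
      have hνC : (ν : ℂ) ≠ 0 := by exact_mod_cast hne
      refine ⟨0, (Complex.I * ν)⁻¹ • UnitAddTorus.mFourier n, fun φ => ?_⟩
      simp only [ContinuousMap.smul_apply, mFourier_toUnitTorus, smul_eq_mul, sub_zero]
      have hlin : ∀ t : ℝ, ((∑ i, n i * (φ + t • ω) i : ℝ) : ℂ) =
          ((∑ i, n i * φ i : ℝ) : ℂ) + (t : ℂ) * ν := by
        intro t
        rw [← Complex.ofReal_mul, ← Complex.ofReal_add]
        congr 1
        rw [hν, Finset.mul_sum, ← Finset.sum_add_distrib]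
        refine Finset.sum_congr rfl fun i _ => ?_
        simp
        ring
      simp only [hlin]
      have h1 : HasDerivAt (fun t : ℝ => Complex.I * (((∑ i, n i * φ i : ℝ) : ℂ) + (t : ℂ) * ν))
          (Complex.I * (1 * ν)) 0 :=
        (((Complex.ofRealCLM.hasDerivAt (x := (0 : ℝ))).mul_const (ν : ℂ)).const_add _).const_mul _
      refine ((h1.cexp).const_mul (Complex.I * ν)⁻¹).congr_deriv ?_
      simp only [Complex.ofReal_zero, zero_mul, add_zero, one_mul]
      field_simp
  | zero => exact ⟨0, 0, fun φ => by simpa using hasDerivAt_const (0 : ℝ) (0 : ℂ)⟩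
  | add x y _ _ hx hy =>
    obtain ⟨c, q, h⟩ := hx
    obtain ⟨c', q', h'⟩ := hy
    refine ⟨c + c', q + q', fun φ => ?_⟩
    refine ((h φ).add (h' φ)).congr_deriv ?_
    simp only [ContinuousMap.add_apply]
    ring
  | smul a x _ hx =>
    obtain ⟨c, q, h⟩ := hx
    refine ⟨a * c, a • q, fun φ => ?_⟩
    refine ((h φ).const_mul a).congr_deriv ?_
    simp only [ContinuousMap.smul_apply, smul_eq_mul]
    ring

theorem toUnitTorus_per {k : ℕ} :
    TorusPer (toUnitTorus : (Fin k → ℝ) → UnitAddTorus (Fin k)) := by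
  intro φ n
  funext i
  have : (φ i + 2 * π * (n i : ℝ)) / (2 * π) = φ i / (2 * π) + n i := by field_simp
  simp only [toUnitTorus, Pi.add_apply, this]
  rw [AddCircle.coe_add, (AddCircle.coe_eq_zero_iff (1 : ℝ) (x := (n i : ℝ))).2 ⟨n i, by simp⟩, add_zero]

/-- The consequence of Weyl equidistribution that is needed here: a continuous periodic function
vanishing on the orbit `tω` has integral zero over the torus. A trigonometric polynomial
`p = c + D_ω q` within `ε` of `f` has mean `c` both over the torus and along the orbit; the latter
mean is at most `ε`, so the mean of `f` over the torus is at most `2ε`. -/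
theorem setIntegral_eq_zero_of_orbit {k : ℕ} {ω : Fin k → ℝ} (hω : LinearIndependent ℚ ω)
    {f : (Fin k → ℝ) → ℝ} (hper : TorusPer f) (hf : Continuous f)
    (h0 : ∀ t : ℝ, f (t • ω) = 0) : ∫ φ in torusBox k, f φ = 0 := by
  obtain ⟨F, hF⟩ := exists_lift_unitTorus hper hf
  set V := volume.real (torusBox k) with hV
  have hVtop : volume (torusBox k) ≠ ⊤ := (isCompact_torusBox k).measure_lt_top.ne
  have key : ∀ ε > 0, ‖∫ φ in torusBox k, (f φ : ℂ)‖ ≤ 2 * ε * V := by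
    intro ε hε
    have hmem : F ∈ (Submodule.span ℂ
        (range (UnitAddTorus.mFourier (d := Fin k)))).topologicalClosure := by
      rw [UnitAddTorus.span_mFourier_closure_eq_top]; trivial
    obtain ⟨p, hp, hpF⟩ := Metric.mem_closure_iff.1 hmem ε hε
    obtain ⟨c, q, hq⟩ := exists_primitive_of_mem_span hω hp
    have hclose : ∀ x, ‖F x - p x‖ ≤ ε := fun x => by
      rw [← dist_eq_norm]
      exact (ContinuousMap.dist_apply_le_dist x).trans hpF.le
    -- The mean of `p` along the orbit is `c`, and it is at most `ε` since `F` vanishes there.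
    have hc : ‖c‖ ≤ ε := by
      have hT : ∀ T : ℝ, 0 < T → ‖c‖ ≤ ε + 2 * ‖q‖ / T := by
        intro T hTpos
        have hd : ∀ t ∈ Icc (0 : ℝ) T, HasDerivWithinAt
            (fun t : ℝ => q (toUnitTorus (t • ω)) + t • c) (p (toUnitTorus (t • ω))) (Icc 0 T) t := by
          intro t _
          have h1 := hasDerivAt_along (F := fun φ : Fin k → ℝ => q (toUnitTorus φ))
            (D := fun φ => p (toUnitTorus φ) - c) hq 0 t
          simp only [zero_add] at h1
          have h2 := h1.add ((hasDerivAt_id t).smul_const c)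
          simp only [one_smul, sub_add_cancel] at h2
          exact h2.hasDerivWithinAt
        have hb := norm_image_sub_le_of_norm_deriv_le_segment' hd (C := ε) (fun t _ => by
          have := hclose (toUnitTorus (t • ω))
          rwa [hF, h0, Complex.ofReal_zero, zero_sub, norm_neg] at this) T
            (right_mem_Icc.2 hTpos.le)
        simp only [zero_smul, add_zero, sub_zero] at hb
        have e : T • c = (q (toUnitTorus (T • ω)) + T • c - q (toUnitTorus 0))
            - q (toUnitTorus (T • ω)) + q (toUnitTorus 0) := by ring
        have hn : T * ‖c‖ ≤ ε * T + ‖q‖ + ‖q‖ := by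
          calc T * ‖c‖ = ‖T • c‖ := by rw [norm_smul, Real.norm_of_nonneg hTpos.le]
            _ ≤ _ := by
              rw [e]
              exact (norm_add_le _ _).trans (add_le_add ((norm_sub_le _ _).trans
                (add_le_add hb (q.norm_coe_le_norm _))) (q.norm_coe_le_norm _))
        have : ε + 2 * ‖q‖ / T = (ε * T + ‖q‖ + ‖q‖) / T := by field_simp; ring
        rw [this, le_div_iff₀ hTpos]
        linarith
      have hlim : Filter.Tendsto (fun T : ℝ => ε + 2 * ‖q‖ / T) Filter.atTop (nhds (ε + 0)) :=
        tendsto_const_nhds.add (Filter.tendsto_id.const_div_atTop _)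
      rw [add_zero] at hlim
      exact ge_of_tendsto hlim ((Filter.eventually_gt_atTop 0).mono hT)
    have hpc : Continuous fun φ : Fin k → ℝ => p (toUnitTorus φ) - c :=
      (p.continuous.comp continuous_toUnitTorus).sub continuous_const
    have hint := setIntegral_torusBox_deriv (F := fun φ : Fin k → ℝ => q (toUnitTorus φ))
      (D := fun φ => p (toUnitTorus φ) - c)
      (fun φ n => congrArg q (toUnitTorus_per φ n)) (q.continuous.comp continuous_toUnitTorus)
      hpc hq
    have hfc : Continuous fun φ => (f φ : ℂ) := Complex.continuous_ofReal.comp hf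
    rw [← sub_zero (∫ φ in torusBox k, (f φ : ℂ)), ← hint, ← integral_sub
      (hfc.continuousOn.integrableOn_compact (isCompact_torusBox k))
      (hpc.continuousOn.integrableOn_compact (isCompact_torusBox k))]
    refine norm_setIntegral_le_of_norm_le_const hVtop.lt_top fun φ _ => ?_
    rw [← hF, ← sub_add]
    exact (norm_add_le _ _).trans (by linarith [hclose (toUnitTorus φ)])
  rw [integral_complex_ofReal, Complex.norm_real] at key
  have hlim : Filter.Tendsto (fun ε : ℝ => 2 * ε * V) (nhdsWithin 0 (Ioi 0)) (nhds (2 * 0 * V)) :=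
    ((by fun_prop : Continuous fun ε : ℝ => 2 * ε * V).tendsto 0).mono_left nhdsWithin_le_nhds
  rw [mul_zero, zero_mul] at hlim
  exact norm_le_zero_iff.1 (ge_of_tendsto hlim (Filter.eventually_of_mem self_mem_nhdsWithin key))

/-! ### The Christoffel map and the Euler–Lagrange residual -/

/-- The Christoffel symbols of the first kind, `Γ_x(a,b)` with its index lowered by `g`. Unlike
`christoffel` it does not involve the inverse matrix. -/
noncomputable def christoffelLower {m : ℕ} (g : (Fin m → ℝ) → Matrix (Fin m) (Fin m) ℝ)
    (x a b : Fin m → ℝ) : Fin m → ℝ :=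
  fun l => (1 / 2) * ∑ j, ∑ k, (pd (fun y => g y l k) x j + pd (fun y => g y j l) x k
      - pd (fun y => g y j k) x l) * a j * b k

theorem mulVec_christoffel {m : ℕ} {g : (Fin m → ℝ) → Matrix (Fin m) (Fin m) ℝ}
    {x : Fin m → ℝ} (hx : IsUnit (g x).det) (a b : Fin m → ℝ) :
    Matrix.mulVec (g x) (christoffel g x a b) = christoffelLower g x a b := by
  have h : christoffel g x a b = Matrix.mulVec (g x)⁻¹ (christoffelLower g x a b) := by
    funext i
    simp only [christoffel, christoffelLower, Matrix.mulVec, dotProduct]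
    rw [Finset.mul_sum]
    exact Finset.sum_congr rfl fun l _ => by ring
  rw [h, Matrix.mulVec_mulVec, Matrix.mul_nonsing_inv _ hx, Matrix.one_mulVec]

theorem dotp_eq {m : ℕ} (a b : Fin m → ℝ) : dotp a b = a ⬝ᵥ b := rfl

theorem dotp_mulVec_comm {m : ℕ} {A : Matrix (Fin m) (Fin m) ℝ} (hA : ∀ i j, A i j = A j i)
    (a b : Fin m → ℝ) : dotp (Matrix.mulVec A a) b = dotp a (Matrix.mulVec A b) := by
  have : A.transpose = A := Matrix.ext fun i j => hA j i
  rw [dotp_eq, dotp_eq, Matrix.dotProduct_mulVec, ← Matrix.mulVec_transpose, this]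

/-- Compatibility of the Levi-Civita connection with the metric, contracted with `a`, `a`, `h`:
`(g a, Γ(a,h)) + (g Γ(a,a), h) = (D_a g)(a, h)`. -/
theorem christoffelLower_compat {m : ℕ} {g : (Fin m → ℝ) → Matrix (Fin m) (Fin m) ℝ}
    {x : Fin m → ℝ} (hsym : ∀ i j l, pd (fun y => g y i j) x l = pd (fun y => g y j i) x l)
    (a h : Fin m → ℝ) :
    dotp a (christoffelLower g x a h) + dotp (christoffelLower g x a a) h =
      ∑ i, ∑ j, ∑ l, pd (fun y => g y i j) x l * a l * a j * h i := by
  set P : Fin m → Fin m → Fin m → ℝ := fun i j l => pd (fun y => g y i j) x l with hP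
  have hPs : ∀ i j l, P i j l = P j i l := hsym
  -- Each of the six terms on the left is, up to renaming indices and the symmetry of `g`,
  -- one of the two contractions `A` and `B`.
  set A := ∑ i, ∑ j, ∑ l, P i j l * a l * a j * h i with hA
  set B := ∑ i, ∑ j, ∑ l, P j l i * a l * a j * h i with hB
  have rot : ∀ Q : Fin m → Fin m → Fin m → ℝ,
      ∑ l, ∑ j, ∑ k, Q l j k = ∑ k, ∑ l, ∑ j, Q l j k := by
    intro Q
    exact (Finset.sum_congr rfl fun l _ => Finset.sum_comm).trans Finset.sum_comm
  have rot' : ∀ Q : Fin m → Fin m → Fin m → ℝ,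
      ∑ l, ∑ j, ∑ k, Q l j k = ∑ k, ∑ j, ∑ l, Q l j k := by
    intro Q
    rw [rot]
    exact Finset.sum_congr rfl fun k _ => Finset.sum_comm
  have h1 : dotp a (christoffelLower g x a h) = (1 / 2) * (A + B - A) := by
    have e1 : A = ∑ l, ∑ j, ∑ k, P l k j * a l * a j * h k := by
      rw [rot, hA]
      refine Finset.sum_congr rfl fun i _ => Finset.sum_congr rfl fun j _ =>
        Finset.sum_congr rfl fun l _ => ?_
      rw [hPs i j]; ring
    have e2 : B = ∑ l, ∑ j, ∑ k, P j l k * a l * a j * h k := by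
      rw [rot', hB]
    have e3 : A = ∑ l, ∑ j, ∑ k, P j k l * a l * a j * h k := by
      rw [rot', hA]
      refine Finset.sum_congr rfl fun i _ => Finset.sum_congr rfl fun j _ =>
        Finset.sum_congr rfl fun l _ => ?_
      rw [hPs i j]
    nth_rewrite 2 [e3]
    rw [e1, e2]
    simp only [dotp, christoffelLower, Finset.mul_sum, ← Finset.sum_add_distrib,
      ← Finset.sum_sub_distrib]
    refine Finset.sum_congr rfl fun l _ => Finset.sum_congr rfl fun j _ =>
      Finset.sum_congr rfl fun k _ => ?_
    simp only [hP]; ring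
  have h2 : dotp (christoffelLower g x a a) h = (1 / 2) * (A + A - B) := by
    have e1 : A = ∑ l, ∑ j, ∑ k, P l k j * a j * a k * h l := by
      exact Finset.sum_congr rfl fun i _ => Finset.sum_comm
    have e2 : A = ∑ l, ∑ j, ∑ k, P j l k * a j * a k * h l := by
      refine Finset.sum_congr rfl fun i _ => Finset.sum_congr rfl fun j _ =>
        Finset.sum_congr rfl fun l _ => ?_
      rw [hPs i j]; ring
    have e3 : B = ∑ l, ∑ j, ∑ k, P j k l * a j * a k * h l := by
      refine Finset.sum_congr rfl fun i _ => Finset.sum_congr rfl fun j _ =>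
        Finset.sum_congr rfl fun l _ => ?_
      ring
    nth_rewrite 1 [e1]
    rw [e2, e3]
    simp only [dotp, christoffelLower, Finset.mul_sum, Finset.sum_mul, ← Finset.sum_add_distrib,
      ← Finset.sum_sub_distrib]
    refine Finset.sum_congr rfl fun l _ => Finset.sum_congr rfl fun j _ =>
      Finset.sum_congr rfl fun k _ => ?_
    simp only [hP]; ring
  rw [h1, h2]
  ring

theorem gradW_eq {k m : ℕ} {U : Set (Fin m → ℝ)} (hU : IsOpen U)
    {W : (Fin k → ℝ) → (Fin m → ℝ) → ℝ}
    (hW : ContDiffOn ℝ (⊤ : ℕ∞) (fun p : (Fin k → ℝ) × (Fin m → ℝ) => W p.1 p.2)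
      (Set.univ ×ˢ U)) (φ : Fin k → ℝ) {x : Fin m → ℝ} (hx : x ∈ U) (i : Fin m) :
    gradW W φ x i = fderiv ℝ (fun p : (Fin k → ℝ) × (Fin m → ℝ) => W p.1 p.2) (φ, x)
      (0, Pi.single i 1) := by
  have hd : DifferentiableAt ℝ (fun p : (Fin k → ℝ) × (Fin m → ℝ) => W p.1 p.2) (φ, x) :=
    (hW.contDiffAt ((isOpen_univ.prod hU).mem_nhds ⟨trivial, hx⟩)).differentiableAt (by simp)
  have := (hd.hasFDerivAt.comp x (hasFDerivAt_prodMk_right φ x)).fderiv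
  simp only [Function.comp_def] at this
  simp only [gradW]
  rw [show W φ = fun y => W φ y from rfl, this]
  rfl

theorem continuous_gradW {k m : ℕ} {U : Set (Fin m → ℝ)} (hU : IsOpen U)
    {W : (Fin k → ℝ) → (Fin m → ℝ) → ℝ}
    (hW : ContDiffOn ℝ (⊤ : ℕ∞) (fun p : (Fin k → ℝ) × (Fin m → ℝ) => W p.1 p.2)
      (Set.univ ×ˢ U)) {u : (Fin k → ℝ) → (Fin m → ℝ)} (huU : ∀ φ, u φ ∈ U) (hu : Continuous u) :
    Continuous fun φ => gradW W φ (u φ) := by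
  refine continuous_pi fun i => ?_
  simp only [gradW_eq hU hW _ (huU _)]
  have h1 := hW.continuousOn_fderiv_of_isOpen (isOpen_univ.prod hU) (by simp)
  exact (h1.comp_continuous (continuous_id.prodMk hu) fun φ => ⟨trivial, huU φ⟩).clm_apply
    continuous_const

theorem continuous_pd {k m : ℕ} {U : Set (Fin m → ℝ)} (hU : IsOpen U)
    {f : (Fin m → ℝ) → ℝ} (hf : ContDiffOn ℝ (⊤ : ℕ∞) f U)
    {u : (Fin k → ℝ) → (Fin m → ℝ)} (huU : ∀ φ, u φ ∈ U) (hu : Continuous u) (l : Fin m) :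
    Continuous fun φ => pd f (u φ) l :=
  ((hf.continuousOn_fderiv_of_isOpen hU (by simp)).comp_continuous hu huU).clm_apply
    continuous_const

theorem continuous_dotp {k m : ℕ} {a b : (Fin k → ℝ) → Fin m → ℝ}
    (ha : ∀ i, Continuous fun φ => a φ i) (hb : ∀ i, Continuous fun φ => b φ i) :
    Continuous fun φ => dotp (a φ) (b φ) :=
  continuous_finsetSum _ fun i _ => (ha i).mul (hb i)

theorem fderiv_eq_sum_pd {m : ℕ} (f : (Fin m → ℝ) → ℝ) (x v : Fin m → ℝ) :
    fderiv ℝ f x v = ∑ l, pd f x l * v l := by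
  conv_lhs => rw [pi_eq_sum_univ' v]
  rw [map_sum]
  refine Finset.sum_congr rfl fun l _ => ?_
  rw [map_smul, smul_eq_mul, mul_comm, pd]

/-- Proposition 1 (single-chart form): for `ω` with rationally independent components,
`x(t) := u(tω)` is a classical solution of the Euler–Lagrange equations
`ẍ + Γ_x(ẋ,ẋ) = g(x)⁻¹ W'_x(tω,x)` iff the weak variational identity holds on the torus. -/
theorem stmt0 {k m : ℕ} (ω : Fin k → ℝ) (hω : LinearIndependent ℚ ω)
    (U : Set (Fin m → ℝ)) (hU : IsOpen U)
    (g : (Fin m → ℝ) → Matrix (Fin m) (Fin m) ℝ)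
    (hg : ∀ i j, ContDiffOn ℝ (⊤ : ℕ∞) (fun y => g y i j) U)
    (hgpos : ∀ x ∈ U, (g x).PosDef)
    (W : (Fin k → ℝ) → (Fin m → ℝ) → ℝ)
    (hWper : ∀ x, TorusPer (fun φ => W φ x))
    (hW : ContDiffOn ℝ (⊤ : ℕ∞) (fun p : (Fin k → ℝ) × (Fin m → ℝ) => W p.1 p.2)
      (Set.univ ×ˢ U))
    (u : (Fin k → ℝ) → (Fin m → ℝ)) (huper : TorusPer u)
    (huU : ∀ φ, u φ ∈ U) (hu : Continuous u)
    (hu1 : ∀ φ, DifferentiableAt ℝ (fun t : ℝ => u (φ + t • ω)) 0)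
    (hu1c : Continuous (dirDeriv ω u))
    (hu2 : ∀ φ, DifferentiableAt ℝ (fun t : ℝ => dirDeriv ω u (φ + t • ω)) 0)
    (hu2c : Continuous (dirDeriv ω (dirDeriv ω u))) :
    (∀ t : ℝ,
        deriv (deriv (fun s : ℝ => u (s • ω))) t
          + christoffel g (u (t • ω)) (deriv (fun s : ℝ => u (s • ω)) t)
              (deriv (fun s : ℝ => u (s • ω)) t)
          = Matrix.mulVec (g (u (t • ω)))⁻¹ (gradW W (t • ω) (u (t • ω)))) ↔
      (∀ h : (Fin k → ℝ) → (Fin m → ℝ), TorusPer h → ContDiff ℝ 1 h →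
        ∫ φ in torusBox k,
          (dotp (Matrix.mulVec (g (u φ)) (dirDeriv ω u φ))
              (dirDeriv ω h φ + christoffel g (u φ) (dirDeriv ω u φ) (h φ))
            + dotp (gradW W φ (u φ)) (h φ)) = 0) := by
  set v := dirDeriv ω u with hv
  set a := dirDeriv ω v with ha
  have hv' : ∀ φ, HasDerivAt (fun t : ℝ => u (φ + t • ω)) (v φ) 0 := fun φ => (hu1 φ).hasDerivAt
  have ha' : ∀ φ, HasDerivAt (fun t : ℝ => v (φ + t • ω)) (a φ) 0 := fun φ => (hu2 φ).hasDerivAt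
  have hvper : TorusPer v := torusPer_of_hasDerivAt huper hv'
  have haper : TorusPer a := torusPer_of_hasDerivAt hvper ha'
  have hdet : ∀ φ, IsUnit (g (u φ)).det := fun φ =>
    (Matrix.isUnit_iff_isUnit_det _).1 (hgpos _ (huU φ)).isUnit
  have hsymU : ∀ x ∈ U, ∀ i j, g x i j = g x j i := fun x hx i j => by
    simpa using ((hgpos x hx).isHermitian.apply i j).symm
  have hsym : ∀ φ i j l, pd (fun y => g y i j) (u φ) l = pd (fun y => g y j i) (u φ) l := by
    intro φ i j l
    have : (fun y => g y i j) =ᶠ[nhds (u φ)] fun y => g y j i :=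
      Filter.eventually_of_mem (hU.mem_nhds (huU φ)) fun y hy => hsymU y hy i j
    rw [pd, pd, this.fderiv_eq]
  have hgc : ∀ i j, Continuous fun φ => g (u φ) i j := fun i j =>
    (hg i j).continuousOn.comp_continuous hu huU
  have hpdc : ∀ i j l, Continuous fun φ => pd (fun y => g y i j) (u φ) l := fun i j l =>
    continuous_pd hU (hg i j) huU hu l
  have hWc := continuous_gradW hU hW huU hu
  have hvc : ∀ i, Continuous fun φ => v φ i := fun i => (continuous_apply i).comp hu1c
  have hac : ∀ i, Continuous fun φ => a φ i := fun i => (continuous_apply i).comp hu2c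
  have hWci : ∀ i, Continuous fun φ => gradW W φ (u φ) i :=
    fun i => (continuous_apply i).comp hWc
  have hmv : ∀ {w : (Fin k → ℝ) → Fin m → ℝ}, (∀ i, Continuous fun φ => w φ i) →
      ∀ i, Continuous fun φ => Matrix.mulVec (g (u φ)) (w φ) i := by
    intro w hw i
    simp only [Matrix.mulVec, dotProduct]
    exact continuous_finsetSum _ fun j _ => (hgc i j).mul (hw j)
  -- `G` is the Euler–Lagrange residual with its index lowered by `g`.
  set G : (Fin k → ℝ) → Fin m → ℝ := fun φ =>
    Matrix.mulVec (g (u φ)) (a φ) + christoffelLower g (u φ) (v φ) (v φ) - gradW W φ (u φ) with hG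
  have hGc : ∀ i, Continuous fun φ => G φ i := by
    intro i
    refine ((hmv hac i).add ?_).sub (hWci i)
    refine continuous_const.mul (continuous_finsetSum _ fun j _ => continuous_finsetSum _
      fun l _ => (Continuous.mul ?_ (hvc j)).mul (hvc l))
    exact ((hpdc i l j).add (hpdc j i l)).sub (hpdc j l i)
  have hGper : TorusPer G := by
    intro φ n
    have hWn : W (φ + fun i => 2 * π * (n i : ℝ)) = W φ := funext fun x => hWper x φ n
    have hgW : gradW W (φ + fun i => 2 * π * (n i : ℝ)) = gradW W φ := by
      funext x i
      rw [gradW, hWn, gradW]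
    simp only [hG, huper φ n, hvper φ n, haper φ n, hgW]
  have hEL : ∀ φ, a φ + christoffel g (u φ) (v φ) (v φ)
      = Matrix.mulVec (g (u φ))⁻¹ (gradW W φ (u φ)) ↔ G φ = 0 := by
    intro φ
    simp only [hG]
    rw [sub_eq_zero, ← mulVec_christoffel (hdet φ), ← Matrix.mulVec_add]
    constructor
    · intro h
      rw [h, Matrix.mulVec_mulVec, Matrix.mul_nonsing_inv _ (hdet φ), Matrix.one_mulVec]
    · intro h
      rw [← h, Matrix.mulVec_mulVec, Matrix.nonsing_inv_mul _ (hdet φ), Matrix.one_mulVec]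
  have hd1 : deriv (fun s : ℝ => u (s • ω)) = fun t => v (t • ω) := by
    funext t
    simpa using (hasDerivAt_along hv' 0 t).deriv
  have hd2 : ∀ t, deriv (fun s : ℝ => v (s • ω)) t = a (t • ω) := by
    intro t
    simpa using (hasDerivAt_along ha' 0 t).deriv
  -- The weak identity tests `G` against `h`, up to the derivative of `(g(u) D_ω u, h)`.
  have hweak : ∀ h : (Fin k → ℝ) → (Fin m → ℝ), TorusPer h → ContDiff ℝ 1 h →
      ∫ φ in torusBox k,
          (dotp (Matrix.mulVec (g (u φ)) (v φ))
              (dirDeriv ω h φ + christoffel g (u φ) (v φ) (h φ))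
            + dotp (gradW W φ (u φ)) (h φ)) = - ∫ φ in torusBox k, dotp (G φ) (h φ) := by
    intro h hper hC
    have hh' : ∀ φ, HasDerivAt (fun t : ℝ => h (φ + t • ω)) (fderiv ℝ h φ ω) 0 := by
      intro φ
      have h1 : HasFDerivAt h (fderiv ℝ h φ) (φ + (0 : ℝ) • ω) := by
        simpa using (hC.differentiable (by simp) φ).hasFDerivAt
      have h2 : HasDerivAt (fun t : ℝ => φ + t • ω) ω 0 := by
        simpa using ((hasDerivAt_id (0 : ℝ)).smul_const ω).const_add φ
      exact h1.comp_hasDerivAt (0 : ℝ) h2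
    set b := dirDeriv ω h with hb
    have hbe : ∀ φ, b φ = fderiv ℝ h φ ω := fun φ => (hh' φ).deriv
    have hbc : ∀ i, Continuous fun φ => b φ i := by
      intro i
      simp only [hbe]
      exact (continuous_apply i).comp
        ((hC.continuous_fderiv (by simp)).clm_apply continuous_const)
    have hhc : ∀ i, Continuous fun φ => h φ i := fun i => (continuous_apply i).comp hC.continuous
    have hpoint : ∀ φ, dotp (Matrix.mulVec (g (u φ)) (v φ))
              (b φ + christoffel g (u φ) (v φ) (h φ)) + dotp (gradW W φ (u φ)) (h φ) =
        (dotp (Matrix.mulVec (g (u φ)) (v φ)) (b φ) + dotp (Matrix.mulVec (g (u φ)) (a φ)) (h φ)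
          + ∑ i, ∑ j, ∑ l, pd (fun y => g y i j) (u φ) l * v φ l * v φ j * h φ i)
        - dotp (G φ) (h φ) := by
      intro φ
      have e1 := christoffelLower_compat (hsym φ) (v φ) (h φ)
      have e2 := dotp_mulVec_comm (hsymU _ (huU φ)) (v φ) (christoffel g (u φ) (v φ) (h φ))
      rw [mulVec_christoffel (hdet φ)] at e2
      rw [← e1, ← e2]
      simp only [hG, dotp_eq, dotProduct_add, add_dotProduct, sub_dotProduct]
      ring
    have hGhc : Continuous fun φ => dotp (G φ) (h φ) := continuous_dotp hGc hhc
    have hDc : Continuous fun φ => dotp (Matrix.mulVec (g (u φ)) (v φ)) (b φ)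
          + dotp (Matrix.mulVec (g (u φ)) (a φ)) (h φ)
          + ∑ i, ∑ j, ∑ l, pd (fun y => g y i j) (u φ) l * v φ l * v φ j * h φ i :=
      ((continuous_dotp (hmv hvc) hbc).add (continuous_dotp (hmv hac) hhc)).add
        (continuous_finsetSum _ fun i _ => continuous_finsetSum _ fun j _ =>
          continuous_finsetSum _ fun l _ =>
            (((hpdc i j l).mul (hvc l)).mul (hvc j)).mul (hhc i))
    have hFc : Continuous fun φ => dotp (Matrix.mulVec (g (u φ)) (v φ)) (h φ) :=
      continuous_dotp (hmv hvc) hhc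
    have hDint := setIntegral_torusBox_deriv (ω := ω)
      (F := fun φ => dotp (Matrix.mulVec (g (u φ)) (v φ)) (h φ))
      (fun φ n => by simp only [huper φ n, hvper φ n, hper φ n]) hFc hDc (fun φ => by
        have hgd : ∀ i j, HasDerivAt (fun t : ℝ => g (u (φ + t • ω)) i j)
            (∑ l, pd (fun y => g y i j) (u φ) l * v φ l) 0 := by
          intro i j
          have h1 : HasFDerivAt (fun y => g y i j) (fderiv ℝ (fun y => g y i j) (u φ))
              (u (φ + (0 : ℝ) • ω)) := by
            simpa using (((hg i j).contDiffAt (hU.mem_nhds (huU φ))).differentiableAt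
              (by simp)).hasFDerivAt
          rw [← fderiv_eq_sum_pd]
          exact h1.comp_hasDerivAt (0 : ℝ) (hv' φ)
        have hsum := HasDerivAt.fun_sum (u := Finset.univ) fun i _ =>
          (HasDerivAt.fun_sum (u := Finset.univ) fun j _ =>
            (hgd i j).fun_mul (hasDerivAt_pi.1 (ha' φ) j)).fun_mul (hasDerivAt_pi.1 (hh' φ) i)
        simp only [dotp, Matrix.mulVec, dotProduct]
        refine hsum.congr_deriv ?_
        simp only [zero_smul, add_zero, ← hbe]
        simp only [Finset.sum_add_distrib, Finset.sum_mul, add_mul]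
        ring)
    simp_rw [hpoint]
    rw [integral_sub, hDint, zero_sub]
    · exact hDc.continuousOn.integrableOn_compact (isCompact_torusBox k)
    · exact hGhc.continuousOn.integrableOn_compact (isCompact_torusBox k)
  simp only [hd1, hd2, hEL]
  constructor
  · intro h0 h hper hC
    rw [hweak h hper hC, neg_eq_zero]
    refine setIntegral_eq_zero_of_orbit hω (fun φ n => by simp only [hGper φ n, hper φ n]) ?_ ?_
    · exact continuous_dotp hGc fun i => (continuous_apply i).comp hC.continuous
    · intro t
      simp [h0 t, dotp]
  · intro hall t
    funext i
    refine torus_eq_zero_of_integral_mul (f := fun φ => G φ i)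
      (fun φ n => by simp only [hGper φ n]) (hGc i) (fun h hper hC => ?_) (t • ω)
    have hper' : TorusPer fun φ => (Pi.single i (h φ) : Fin m → ℝ) :=
      fun φ n => by simp only [hper φ n]
    have hC' : ContDiff ℝ 1 fun φ => (Pi.single i (h φ) : Fin m → ℝ) := by
      refine contDiff_pi.2 fun j => ?_
      by_cases hj : j = i
      · subst hj; simpa using hC
      · simpa [Pi.single_eq_of_ne hj] using contDiff_const
    have h1 := hweak _ hper' hC'
    rw [hall _ hper' hC', eq_comm, neg_eq_zero] at h1
    simpa [dotp_eq] using h1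
end

section
/- Let ω ∈ ℝ^k, let C ⊂ U be compact, and let u ∈ H¹_ω(𝕋^k;ℝ^m) take values almost everywhere in C and satisfy the weak variational identity ∫_{𝕋^k} [ ( g(u(φ)) D_ω u(φ) , D_ω h(φ) + Γ_{u(φ)}(D_ω u(φ), h(φ)) ) + ( W'_x(φ, u(φ)) , h(φ) ) ] dφ = 0 for every smooth h: 𝕋^k → ℝ^m. Then there is a representative ũ of u (equal to u almost everywhere) such that for almost every φ ∈ 𝕋^k the function t ↦ ũ(φ + tω) takes values in C, is twice continuously differentiable on all of ℝ, and is a classical solution of the Euler–Lagrange equations ẍ + Γ_x(ẋ,ẋ) = g(x)⁻¹ W'_x(φ+tω, x) for every t ∈ ℝ. (Single-chart form of the paper's Proposition that a weak quasiperiodic solution restricts to classical solutions along almost every trajectory of the linear flow.) -/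
/-!
Write `P = g(u) D_ω u` for the momentum and `F = ½ ∂g(u)(D_ω u, D_ω u) + W'_x(φ,u)` for the force.
The term of the Christoffel symbol that survives in `(g a, Γ(a,b))` is `½ ∂_i g(a,a) b^i`
(`dotp_christoffel`), so the variational identity says that `F` is the weak `D_ω`-derivative of `P`,
just as `D_ω u` is that of `u`. Since `u` stays in a compact set and `D_ω u ∈ L²`, all these
functions are integrable on the torus, `F` being only in `L¹`.

Testing with periodizations of compactly supported functions moves the weak identities from the
torus to `ℝ^k` (`weak_unfold`). There, mollification shows that a weak `D_ω`-derivative integrates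
along the flow: `f(φ+tω) = f(φ) + ∫₀ᵗ G(φ+sω) ds` for a.e. `φ`, for each `t` (`weak_ftc_fixed`), and
by Fubini for a.e. `t` on almost every orbit (`weak_ftc`).

On such an orbit, `u` and `P` agree a.e. with absolutely continuous functions `x` and `p`, with
`p = g(x)ẋ` a.e. Hence `ẋ = g(x)⁻¹p` is continuous, so the force is continuous and `p` is `C¹`, so
`x` is `C²`; differentiating `p = g(x)ẋ` yields the equations (`orbit_solution`).

The representative takes at `φ` the value at time `0` of the continuous function that agrees a.e.
with `t ↦ u(φ+tω)`, if there is one (`preciseRep`). That function is unique, so this choice is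
consistent along orbits and periodic.
-/

open MeasureTheory Real Set

open scoped Topology

/-! ### Periodic functions and the unfolding of weak identities -/

/-- The lattice vector `2πn`, `n ∈ ℤ^k`. -/
noncomputable def lat {k : ℕ} (n : Fin k → ℤ) : Fin k → ℝ := fun i => 2 * Real.pi * (n i : ℝ)

/-- The half-open cell `2πn + [0,2π)^k`. -/
def cell {k : ℕ} (n : Fin k → ℤ) : Set (Fin k → ℝ) :=
  {φ | ∀ i, ⌊φ i / (2 * Real.pi)⌋ = n i}

lemma measurableSet_cell {k : ℕ} (n : Fin k → ℤ) : MeasurableSet (cell n) := by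
  have : cell n = ⋂ i, (fun φ : Fin k → ℝ => ⌊φ i / (2 * Real.pi)⌋) ⁻¹' {n i} := by
    ext φ; simp [cell]
  rw [this]
  refine MeasurableSet.iInter fun i => ?_
  have hm : Measurable (fun φ : Fin k → ℝ => ⌊φ i / (2 * Real.pi)⌋) :=
    Int.measurable_floor.comp ((measurable_pi_apply i).div_const _)
  exact hm (measurableSet_singleton _)

lemma cell_zero_ae {k : ℕ} : (cell (0 : Fin k → ℤ)) =ᵐ[volume] torusBox k := by
  have : cell (0 : Fin k → ℤ) = pi univ fun _ => Ico (0 : ℝ) (2 * Real.pi) := by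
    ext φ
    simp only [cell, Pi.zero_apply, mem_ofPred_eq, mem_pi, mem_univ, true_implies]
    refine forall_congr' fun i => ?_
    rw [Int.floor_eq_zero_iff, mem_Ico, mem_Ico, div_lt_one Real.two_pi_pos,
      le_div_iff₀ Real.two_pi_pos, zero_mul]
  rw [this]
  exact Measure.univ_pi_Ico_ae_eq_Icc

lemma mem_cell_add {k : ℕ} (n : Fin k → ℤ) (φ : Fin k → ℝ) :
    φ + lat n ∈ cell n ↔ φ ∈ cell 0 := by
  simp only [cell, lat, mem_ofPred_eq, Pi.add_apply, Pi.zero_apply]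
  refine forall_congr' fun i => ?_
  rw [add_div, mul_div_cancel_left₀ _ Real.two_pi_pos.ne', Int.floor_add_intCast]
  omega

lemma mp_add {k : ℕ} (v : Fin k → ℝ) :
    MeasurePreserving (fun φ : Fin k → ℝ => φ + v) volume volume :=
  measurePreserving_add_right volume v

lemma me_add {k : ℕ} (v : Fin k → ℝ) :
    MeasurableEmbedding (fun φ : Fin k → ℝ => φ + v) :=
  measurableEmbedding_addRight v

lemma setIntegral_cell {k : ℕ} (n : Fin k → ℤ) (F : (Fin k → ℝ) → ℝ) :
    ∫ φ in cell n, F φ = ∫ φ in torusBox k, F (φ + lat n) := by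
  rw [← setIntegral_congr_set cell_zero_ae,
    ← (mp_add (lat n)).setIntegral_preimage_emb (me_add (lat n)) F (cell n)]
  congr 2
  ext φ
  exact mem_cell_add n φ

lemma iUnion_cell {k : ℕ} : (⋃ n : Fin k → ℤ, cell n) = univ := by
  ext φ
  simp only [mem_iUnion, mem_univ, iff_true]
  exact ⟨fun i => ⌊φ i / (2 * Real.pi)⌋, fun i => rfl⟩

lemma integral_eq_tsum_box {k : ℕ} {F : (Fin k → ℝ) → ℝ} (hF : Integrable F) :
    ∫ φ, F φ = ∑' n : Fin k → ℤ, ∫ φ in torusBox k, F (φ + lat n) := by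
  rw [← setIntegral_univ, ← iUnion_cell, integral_iUnion measurableSet_cell]
  · simp_rw [setIntegral_cell]
  · intro a b hab
    refine Set.disjoint_left.2 fun φ ha hb => hab ?_
    ext i
    exact (ha i).symm.trans (hb i)
  · exact hF.integrableOn

/-- Only finitely many lattice translates of a bounded set meet another bounded set. -/
lemma exists_finset_lat {k : ℕ} (R : ℝ) :
    ∃ N : Finset (Fin k → ℤ), ∀ n, n ∉ N → ∀ φ : Fin k → ℝ, ‖φ‖ ≤ R → R < ‖φ + lat n‖ := by
  obtain ⟨M, hM⟩ := exists_nat_gt (2 * R)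
  refine ⟨Fintype.piFinset fun _ => Finset.Icc (-(M : ℤ)) M, fun n hn φ hφ => ?_⟩
  have : ∃ i, (M : ℝ) < |(n i : ℝ)| := by
    by_contra hcon
    push Not at hcon
    refine hn (Fintype.mem_piFinset.2 fun i => ?_)
    have h := abs_le.1 (hcon i)
    rw [Finset.mem_Icc]
    exact ⟨by exact_mod_cast h.1, by exact_mod_cast h.2⟩
  obtain ⟨i, hi⟩ := this
  have h1 : ‖φ i‖ ≤ R := (norm_le_pi_norm φ i).trans hφ
  have h2 : ‖(φ + lat n) i‖ ≤ ‖φ + lat n‖ := norm_le_pi_norm _ i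
  have h3 : ‖lat n i‖ ≤ ‖(φ + lat n) i‖ + ‖φ i‖ := by
    have : lat n i = (φ + lat n) i - φ i := by simp
    rw [this]; exact norm_sub_le _ _
  have h4 : |(n i : ℝ)| ≤ ‖lat n i‖ := by
    simp only [lat, norm_mul, Real.norm_eq_abs, abs_of_pos Real.pi_pos]
    have : (1 : ℝ) ≤ |2| * Real.pi := by
      rw [abs_of_pos two_pos]; nlinarith [Real.pi_gt_three]
    nlinarith [abs_nonneg (n i : ℝ)]
  linarith

lemma norm_le_of_mem_box {k : ℕ} {φ : Fin k → ℝ} (h : φ ∈ torusBox k) : ‖φ‖ ≤ 2 * Real.pi := by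
  rw [pi_norm_le_iff_of_nonneg Real.two_pi_pos.le]
  intro i
  rw [Real.norm_eq_abs, abs_le]
  exact ⟨by have := h.1 i; simp at this; linarith [Real.two_pi_pos], h.2 i⟩

lemma measurableSet_box {k : ℕ} : MeasurableSet (torusBox k) := measurableSet_Icc

lemma locallyIntegrable_of_torusPer {k : ℕ} {f : (Fin k → ℝ) → ℝ} (hf : TorusPer f)
    (hi : IntegrableOn f (torusBox k)) : LocallyIntegrable f := by
  rw [locallyIntegrable_iff]
  intro K hK
  obtain ⟨R, hR⟩ := hK.isBounded.exists_norm_le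
  set R' := max R (2 * Real.pi)
  obtain ⟨N, hN⟩ := exists_finset_lat (k := k) R'
  have hsub : K ⊆ ⋃ n ∈ N, cell (-n) := by
    intro φ hφ
    obtain ⟨n, hn⟩ := mem_iUnion.1 ((iUnion_cell (k := k)).symm ▸ mem_univ φ)
    have h0 : φ + lat (-n) ∈ cell 0 := by
      rw [← mem_cell_add n]
      convert hn using 1
      ext i; simp [lat]
    refine mem_iUnion₂.2 ⟨-n, ?_, by simpa using hn⟩
    by_contra hnN
    have := hN _ hnN φ ((hR φ hφ).trans (le_max_left _ _))
    have h2 : ‖φ + lat (-n)‖ ≤ 2 * Real.pi := by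
      apply norm_le_of_mem_box
      refine ⟨fun i => ?_, fun i => ?_⟩
      · have := Int.floor_eq_zero_iff.1 (h0 i)
        have := this.1
        rw [le_div_iff₀ Real.two_pi_pos, zero_mul] at this
        exact this
      · have := Int.floor_eq_zero_iff.1 (h0 i)
        have := this.2
        rw [div_lt_one Real.two_pi_pos] at this
        exact this.le
    exact absurd (h2.trans (le_max_right R _)) (not_le.2 this)
  refine IntegrableOn.mono_set ?_ hsub
  rw [integrableOn_finset_iUnion]
  intro n _
  rw [← (mp_add (lat (-n))).integrableOn_comp_preimage (me_add _)]
  have h1 : (fun φ : Fin k → ℝ => φ + lat (-n)) ⁻¹' cell (-n) = cell 0 := by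
    ext φ; exact mem_cell_add _ φ
  have h2 : (f ∘ fun φ => φ + lat (-n)) = f := by
    ext φ; exact hf φ (-n)
  rw [h1, h2]
  exact hi.congr_set_ae cell_zero_ae

lemma dirDeriv_eq_fderiv {k : ℕ} {ω : Fin k → ℝ} {h : (Fin k → ℝ) → ℝ} {φ : Fin k → ℝ}
    (hd : DifferentiableAt ℝ h φ) : dirDeriv ω h φ = fderiv ℝ h φ ω := by
  have h1 : HasFDerivAt h (fderiv ℝ h φ) (φ + (0 : ℝ) • ω) := by simpa using hd.hasFDerivAt
  have h2 : HasDerivAt (fun t : ℝ => φ + t • ω) ω 0 := by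
    simpa using ((hasDerivAt_id (0 : ℝ)).smul_const ω).const_add φ
  exact (h1.comp_hasDerivAt 0 h2).deriv

/-- An identity `∫_{𝕋^k} (f D_ω h + G h) = 0` for all smooth periodic `h` unfolds to the same
identity on `ℝ^k` for compactly supported smooth test functions: test it with the periodization
`h = ∑_n η(· + 2πn)` of `η`. -/
lemma weak_unfold {k : ℕ} {ω : Fin k → ℝ} {f G : (Fin k → ℝ) → ℝ}
    (hf : TorusPer f) (hG : TorusPer G)
    (hfi : LocallyIntegrable f) (hGi : LocallyIntegrable G)
    (hw : ∀ h : (Fin k → ℝ) → ℝ, TorusPer h → ContDiff ℝ (⊤ : ℕ∞) h →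
      ∫ φ in torusBox k, (f φ * dirDeriv ω h φ + G φ * h φ) = 0)
    {η : (Fin k → ℝ) → ℝ} (hη : ContDiff ℝ (⊤ : ℕ∞) η) (hηc : HasCompactSupport η) :
    ∫ φ, f φ * fderiv ℝ η φ ω = - ∫ φ, G φ * η φ := by
  have hdη : Continuous fun φ => fderiv ℝ η φ ω :=
    (hη.continuous_fderiv (by simp)).clm_apply continuous_const
  have hdηc : HasCompactSupport fun φ => fderiv ℝ η φ ω := hηc.fderiv_apply ℝ ω
  have hI1 : Integrable fun φ => f φ * fderiv ℝ η φ ω := by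
    simpa [mul_comm] using hfi.integrable_smul_left_of_hasCompactSupport hdη hdηc
  have hI2 : Integrable fun φ => G φ * η φ := by
    simpa [mul_comm] using hGi.integrable_smul_left_of_hasCompactSupport hη.continuous hηc
  have hI3 : Integrable fun φ => f φ * fderiv ℝ η φ ω + G φ * η φ := hI1.add hI2
  rw [eq_neg_iff_add_eq_zero, ← integral_add hI1 hI2, integral_eq_tsum_box hI3]
  obtain ⟨R, hR⟩ := hηc.isCompact.isBounded.exists_norm_le
  have hout : ∀ φ, R < ‖φ‖ → φ ∉ tsupport η := fun φ h hφ => absurd (hR φ hφ) (not_le.2 h)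
  set h : (Fin k → ℝ) → ℝ := fun φ => ∑ᶠ n : Fin k → ℤ, η (φ + lat n) with hh
  -- near any bounded region the periodization is a fixed finite sum
  have hloc : ∀ S : ℝ, ∃ N : Finset (Fin k → ℤ), (∀ n ∉ N, ∀ φ, ‖φ‖ ≤ S →
      φ + lat n ∉ tsupport η) ∧ ∀ φ, ‖φ‖ ≤ S → h φ = ∑ n ∈ N, η (φ + lat n) := by
    intro S
    obtain ⟨N, hN⟩ := exists_finset_lat (k := k) (max R S)
    have h0 : ∀ n ∉ N, ∀ φ, ‖φ‖ ≤ S → φ + lat n ∉ tsupport η := fun n hn φ hφ =>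
      hout _ ((le_max_left R S).trans_lt (hN n hn φ (hφ.trans (le_max_right R S))))
    refine ⟨N, h0, fun φ hφ => ?_⟩
    refine finsum_eq_sum_of_support_subset _ fun n hn => ?_
    by_contra hnN
    exact hn (image_eq_zero_of_notMem_tsupport (h0 n (by simpa using hnN) φ hφ))
  have hnhds : ∀ φ : Fin k → ℝ, ∀ᶠ ψ in 𝓝 φ, ‖ψ‖ ≤ ‖φ‖ + 1 := fun φ =>
    (continuous_norm.tendsto φ).eventually (Iic_mem_nhds (by linarith))
  have hper : TorusPer h := by
    intro φ n
    simp only [hh]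
    rw [← finsum_comp_equiv (Equiv.addLeft n) (f := fun j => η (φ + lat j))]
    refine finsum_congr fun j => ?_
    congr 1
    ext i
    simp [lat]; ring
  have hshift : ∀ n : Fin k → ℤ, ContDiff ℝ (⊤ : ℕ∞) fun φ => η (φ + lat n) := fun n =>
    hη.comp (contDiff_id.add contDiff_const)
  have hsm : ContDiff ℝ (⊤ : ℕ∞) h := by
    rw [contDiff_iff_contDiffAt]
    intro φ
    obtain ⟨N, -, hN⟩ := hloc (‖φ‖ + 1)
    have : ContDiff ℝ (⊤ : ℕ∞) fun φ => ∑ n ∈ N, η (φ + lat n) := ContDiff.sum fun n _ => hshift n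
    exact this.contDiffAt.congr_of_eventuallyEq ((hnhds φ).mono hN)
  obtain ⟨N, hN0, hN⟩ := hloc (2 * Real.pi + 1)
  have hder : ∀ φ ∈ torusBox k, dirDeriv ω h φ = ∑ n ∈ N, fderiv ℝ η (φ + lat n) ω := by
    intro φ hφ
    have hb := norm_le_of_mem_box hφ
    rw [dirDeriv_eq_fderiv (hsm.differentiable (by simp) φ)]
    have he : h =ᶠ[𝓝 φ] fun φ => ∑ n ∈ N, η (φ + lat n) :=
      (hnhds φ).mono fun ψ hψ => hN ψ (by linarith)
    rw [he.fderiv_eq, fderiv_fun_sum fun n _ => (hshift n).differentiable (by simp) φ]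
    simp [fderiv_comp_add_right]
  rw [tsum_eq_sum (s := N)]
  · rw [← integral_finsetSum, ← hw h hper hsm]
    · refine setIntegral_congr_fun measurableSet_box fun φ hφ => ?_
      rw [hder φ hφ, hN φ (by linarith [norm_le_of_mem_box hφ]), Finset.mul_sum, Finset.mul_sum,
        ← Finset.sum_add_distrib]
      refine Finset.sum_congr rfl fun n _ => ?_
      rw [show f (φ + lat n) = f φ from hf φ n, show G (φ + lat n) = G φ from hG φ n]
    · intro n _
      exact ((mp_add (lat n)).integrable_comp_emb (me_add _) |>.2 hI3).integrableOn
  · intro n hn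
    refine setIntegral_eq_zero_of_forall_eq_zero fun φ hφ => ?_
    have hnot := hN0 n hn φ (by linarith [norm_le_of_mem_box hφ])
    have h1 : η (φ + lat n) = 0 := image_eq_zero_of_notMem_tsupport hnot
    have h2 : fderiv ℝ η (φ + lat n) = 0 := fderiv_of_notMem_tsupport ℝ hnot
    simp [h1, h2]

/-! ### Integration of weak derivatives along the linear flow -/

lemma flow_measurePreserving {k : ℕ} (ω : Fin k → ℝ) :
    MeasurePreserving (fun z : ℝ × (Fin k → ℝ) => (z.1, z.2 + z.1 • ω))
      (volume.prod volume) (volume.prod volume) := by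
  refine MeasurePreserving.skew_product (f := id) (g := fun s φ => φ + s • ω)
    (MeasurePreserving.id _) (by fun_prop) (Filter.Eventually.of_forall fun s => ?_)
  exact (mp_add (s • ω)).map_eq

lemma flow_ae {k : ℕ} (ω : Fin k → ℝ) {P : (Fin k → ℝ) → Prop} (hP : ∀ᵐ φ, P φ) :
    ∀ᵐ z : (Fin k → ℝ) × ℝ ∂(volume.prod volume), P (z.1 + z.2 • ω) := by
  have h1 : Measure.QuasiMeasurePreserving (fun z : (Fin k → ℝ) × ℝ => z.1 + z.2 • ω)
      (volume.prod volume) volume :=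
    Measure.quasiMeasurePreserving_snd.comp
      ((flow_measurePreserving ω).quasiMeasurePreserving.comp
        Measure.measurePreserving_swap.quasiMeasurePreserving)
  exact h1.ae hP

/-- A null set of `ℝ^k` meets almost every orbit of the linear flow in a null set of times. -/
lemma ae_ae_flow {k : ℕ} (ω : Fin k → ℝ) {P : (Fin k → ℝ) → Prop} (hP : ∀ᵐ φ, P φ) :
    ∀ᵐ φ : Fin k → ℝ, ∀ᵐ t : ℝ, P (φ + t • ω) :=
  Measure.ae_ae_of_ae_prod (flow_ae ω hP)

lemma locallyIntegrable_flow {k : ℕ} (ω : Fin k → ℝ) {G : (Fin k → ℝ) → ℝ}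
    (hG : LocallyIntegrable G) :
    LocallyIntegrable (fun z : ℝ × (Fin k → ℝ) => G (z.2 + z.1 • ω)) (volume.prod volume) := by
  have h1 : LocallyIntegrable (fun z : ℝ × (Fin k → ℝ) => G z.2) (volume.prod volume) := by
    rintro ⟨s, φ⟩
    obtain ⟨V, hV, hVi⟩ := hG φ
    refine ⟨Icc (s - 1) (s + 1) ×ˢ V, prod_mem_nhds (Icc_mem_nhds (by linarith) (by linarith)) hV, ?_⟩
    rw [IntegrableOn, ← Measure.prod_restrict]
    exact Integrable.comp_snd hVi _
  let e : ℝ × (Fin k → ℝ) ≃ₜ ℝ × (Fin k → ℝ) :=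
    { toFun := fun z => (z.1, z.2 + z.1 • ω)
      invFun := fun z => (z.1, z.2 - z.1 • ω)
      left_inv := fun z => by simp
      right_inv := fun z => by simp
      continuous_toFun := by fun_prop
      continuous_invFun := by fun_prop }
  have he : Measure.map e (volume.prod volume) = volume.prod volume :=
    (flow_measurePreserving ω).map_eq
  rw [← he, locallyIntegrable_map_homeomorph] at h1
  exact h1

lemma integrable_flow_Icc {k : ℕ} (ω : Fin k → ℝ) {G : (Fin k → ℝ) → ℝ}
    (hG : LocallyIntegrable G) (a b : ℝ) {K : Set (Fin k → ℝ)} (hK : IsCompact K) :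
    Integrable (fun z : ℝ × (Fin k → ℝ) => G (z.2 + z.1 • ω))
      ((volume.restrict (uIoc a b)).prod (volume.restrict K)) := by
  have h := (locallyIntegrable_flow ω hG).integrableOn_isCompact
    ((isCompact_uIcc (a := a) (b := b)).prod hK)
  rw [IntegrableOn, ← Measure.prod_restrict] at h
  exact h.mono_measure (Measure.prod_mono (Measure.restrict_mono uIoc_subset_uIcc le_rfl) le_rfl)

lemma ae_locallyIntegrable_orbit {k : ℕ} (ω : Fin k → ℝ) {G : (Fin k → ℝ) → ℝ}
    (hG : LocallyIntegrable G) :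
    ∀ᵐ φ : Fin k → ℝ, LocallyIntegrable (fun s : ℝ => G (φ + s • ω)) := by
  have h : ∀ N : ℕ, ∀ᵐ φ : Fin k → ℝ, φ ∈ Metric.closedBall (0 : Fin k → ℝ) N →
      IntegrableOn (fun s : ℝ => G (φ + s • ω)) (uIoc (-(N : ℝ)) N) := by
    intro N
    rw [← ae_restrict_iff' Metric.isClosed_closedBall.measurableSet]
    exact (integrable_flow_Icc ω hG (-(N : ℝ)) N
      (isCompact_closedBall (0 : Fin k → ℝ) (N : ℝ))).prod_left_ae
  filter_upwards [ae_all_iff.2 h] with φ hφ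
  rw [locallyIntegrable_iff]
  intro K hK
  obtain ⟨R, hR⟩ := hK.isBounded.exists_norm_le
  obtain ⟨N, hN⟩ := exists_nat_gt (max R ‖φ‖)
  refine (hφ N ?_).mono_set fun s hs => ?_
  · simpa using ((le_max_right _ _).trans_lt hN).le
  · have h1 := abs_le.1 (hR s hs)
    have h2 := (le_max_left R ‖φ‖).trans_lt hN
    rw [uIoc_of_le (by linarith)]
    exact ⟨by linarith, by linarith⟩

/-- Weak differentiability along `ω`, integrated: for each fixed `t`,
`f(φ+tω) - f(φ) = ∫₀ᵗ G(φ+sω) ds` for a.e. `φ`. Both sides are compared after mollification: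
`s ↦ (f ⋆ ζ)(sω)` is `C¹` with derivative `(G ⋆ ζ)(sω)`. -/
lemma weak_ftc_fixed {k : ℕ} {ω : Fin k → ℝ} {f G : (Fin k → ℝ) → ℝ}
    (hf : LocallyIntegrable f) (hG : LocallyIntegrable G)
    (hw : ∀ η : (Fin k → ℝ) → ℝ, ContDiff ℝ (⊤ : ℕ∞) η → HasCompactSupport η →
      ∫ φ, f φ * fderiv ℝ η φ ω = - ∫ φ, G φ * η φ) (t : ℝ) :
    ∀ᵐ φ : Fin k → ℝ, f (φ + t • ω) = f φ + ∫ s in (0 : ℝ)..t, G (φ + s • ω) := by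
  have hft : LocallyIntegrable fun φ => f (φ + t • ω) := by
    have := locallyIntegrable_map_homeomorph (Homeomorph.addRight (t • ω)) (f := f)
      (μ := (volume : Measure (Fin k → ℝ)))
    rw [show Measure.map (Homeomorph.addRight (t • ω)) volume = volume from
      (mp_add (t • ω)).map_eq] at this
    exact this.1 hf
  have hGt : LocallyIntegrable fun φ => ∫ s in (0 : ℝ)..t, G (φ + s • ω) := by
    rw [locallyIntegrable_iff]
    intro K hK
    have h := (integrable_flow_Icc ω hG 0 t hK).integral_prod_right
    simp_rw [intervalIntegral.intervalIntegral_eq_integral_uIoc]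
    exact h.const_mul (if (0 : ℝ) ≤ t then 1 else -1)
  have key : ∀ᵐ φ : Fin k → ℝ,
      f (φ + t • ω) - f φ - ∫ s in (0 : ℝ)..t, G (φ + s • ω) = 0 := by
    refine ae_eq_zero_of_integral_contDiff_smul_eq_zero ((hft.sub hf).sub hGt) ?_
    intro η hη hηc
    set ζ : (Fin k → ℝ) → ℝ := fun x => η (-x) with hζ
    have hζs : ContDiff ℝ (⊤ : ℕ∞) ζ := hη.comp contDiff_neg
    have hζc : HasCompactSupport ζ := hηc.comp_homeomorph (Homeomorph.neg _)
    have hconv : ∀ (q : (Fin k → ℝ) → ℝ) (s : ℝ),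
        convolution q ζ (ContinuousLinearMap.mul ℝ ℝ) volume (s • ω)
          = ∫ φ, q (φ + s • ω) * η φ := by
      intro q s
      rw [convolution_def, ← integral_add_right_eq_self _ (s • ω)]
      simp [hζ]
    have hderiv : ∀ s : ℝ, HasDerivAt
        (fun s : ℝ => convolution f ζ (ContinuousLinearMap.mul ℝ ℝ) volume (s • ω))
        (convolution G ζ (ContinuousLinearMap.mul ℝ ℝ) volume (s • ω)) s := by
      intro s
      have h1 := hζc.hasFDerivAt_convolution_right (ContinuousLinearMap.mul ℝ ℝ) hf
        (hζs.of_le (by simp)) (s • ω)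
      have h2 : HasDerivAt (fun s : ℝ => s • ω) ω s := by
        simpa using (hasDerivAt_id s).smul_const ω
      have h3 := h1.comp_hasDerivAt s h2
      rw [convolution_precompR_apply _ hf (hζc.fderiv ℝ) (hζs.continuous_fderiv (by simp))] at h3
      refine h3.congr_deriv ?_
      rw [convolution_def, convolution_def]
      have hψ : ContDiff ℝ (⊤ : ℕ∞) fun φ => ζ (s • ω - φ) :=
        hζs.comp (contDiff_const.sub contDiff_id)
      have hψc : HasCompactSupport fun φ => ζ (s • ω - φ) :=
        hζc.comp_homeomorph (Homeomorph.subLeft (s • ω))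
      have h4 := hw _ hψ hψc
      have h5 : ∀ φ, fderiv ℝ (fun φ => ζ (s • ω - φ)) φ ω = - fderiv ℝ ζ (s • ω - φ) ω := by
        intro φ
        have h6 := ((hζs.differentiable (by simp) (s • ω - φ)).hasFDerivAt.comp φ
          ((hasFDerivAt_id φ).const_sub (s • ω))).fderiv
        simpa [Function.comp_def] using congrArg (fun L => L ω) h6
      simp_rw [h5, mul_neg, integral_neg, neg_inj] at h4
      simpa using h4
    have hcont : Continuous
        fun s : ℝ => convolution G ζ (ContinuousLinearMap.mul ℝ ℝ) volume (s • ω) :=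
      (hζc.continuous_convolution_right _ hG hζs.continuous).comp (by fun_prop)
    have hftc := intervalIntegral.integral_eq_sub_of_hasDerivAt (a := 0) (b := t)
      (fun s _ => hderiv s) (hcont.intervalIntegrable 0 t)
    simp_rw [hconv] at hftc
    have hint : ∀ q : (Fin k → ℝ) → ℝ, LocallyIntegrable q → Integrable fun φ => q φ * η φ :=
      fun q hq => by
        simpa [mul_comm] using hq.integrable_smul_left_of_hasCompactSupport hη.continuous hηc
    rw [intervalIntegral_integral_swap] at hftc
    · simp_rw [intervalIntegral.integral_mul_const] at hftc
      have e : ∀ φ, η φ • (f (φ + t • ω) - f φ - ∫ s in (0 : ℝ)..t, G (φ + s • ω))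
          = f (φ + t • ω) * η φ - f φ * η φ - (∫ s in (0 : ℝ)..t, G (φ + s • ω)) * η φ := by
        intro φ; rw [smul_eq_mul]; ring
      simp_rw [e]
      have i1 := hint _ hft
      have i2 := hint _ hf
      have i3 := hint _ hGt
      have i4 : Integrable fun φ => f (φ + t • ω) * η φ - f φ * η φ := i1.sub i2
      rw [integral_sub i4 i3, integral_sub i1 i2, hftc]
      simp
    · -- `η` is supported in a compact set, on which the orbit integrals are jointly integrable
      have hK := integrable_flow_Icc ω hG 0 t hηc.isCompact
      obtain ⟨M, hM⟩ := hη.continuous.bounded_above_of_compact_support hηc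
      have hb : Integrable (fun z : ℝ × (Fin k → ℝ) => G (z.2 + z.1 • ω) * η z.2)
          ((volume.restrict (uIoc 0 t)).prod (volume.restrict (tsupport η))) := by
        refine hK.mul_bdd (c := M) ?_ ?_
        · exact (hη.continuous.comp continuous_snd).aestronglyMeasurable
        · exact Filter.Eventually.of_forall fun z => hM z.2
      rw [← Measure.restrict_univ (μ := volume.restrict (uIoc 0 t)), Measure.prod_restrict] at hb
      refine (integrableOn_iff_integrable_of_support_subset ?_).1 hb
      rintro ⟨s, φ⟩ hz
      refine ⟨mem_univ _, ?_⟩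
      by_contra hφ
      exact hz (by simp [Function.uncurry, image_eq_zero_of_notMem_tsupport hφ])
  filter_upwards [key] with φ hφ
  linarith

/-- For a.e. `φ`, the fundamental theorem of calculus holds along the orbit of `φ` for a.e. time. -/
lemma weak_ftc {k : ℕ} {ω : Fin k → ℝ} {f G : (Fin k → ℝ) → ℝ}
    (hf : LocallyIntegrable f) (hG : LocallyIntegrable G)
    (hw : ∀ η : (Fin k → ℝ) → ℝ, ContDiff ℝ (⊤ : ℕ∞) η → HasCompactSupport η →
      ∫ φ, f φ * fderiv ℝ η φ ω = - ∫ φ, G φ * η φ) :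
    ∀ᵐ φ : Fin k → ℝ, ∀ᵐ t : ℝ, f (φ + t • ω) = f φ + ∫ s in (0 : ℝ)..t, G (φ + s • ω) := by
  obtain ⟨f', hf'm, hff'⟩ := hf.aestronglyMeasurable
  obtain ⟨G', hG'm, hGG'⟩ := hG.aestronglyMeasurable
  have horb : ∀ φ : Fin k → ℝ, (∀ᵐ s : ℝ, G (φ + s • ω) = G' (φ + s • ω)) → ∀ t : ℝ,
      ∫ s in (0 : ℝ)..t, G (φ + s • ω) = ∫ s in (0 : ℝ)..t, G' (φ + s • ω) := fun φ h t =>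
    intervalIntegral.integral_congr_ae (h.mono fun s hs _ => hs)
  have hmeas : Measurable fun z : (Fin k → ℝ) × ℝ =>
      ∫ s in (0 : ℝ)..z.2, G' (z.1 + s • ω) := by
    -- rescale to the fixed interval `[0,1]`, where parametric integrals are measurable
    have h1 : ∀ z : (Fin k → ℝ) × ℝ, ∫ s in (0 : ℝ)..z.2, G' (z.1 + s • ω)
        = z.2 * ∫ r in Ioc (0 : ℝ) 1, G' (z.1 + (z.2 * r) • ω) := by
      intro z
      rw [← intervalIntegral.integral_of_le zero_le_one, intervalIntegral.mul_integral_comp_mul_left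
        (f := fun s => G' (z.1 + s • ω))]
      simp
    simp_rw [h1]
    refine measurable_snd.mul (StronglyMeasurable.measurable ?_)
    refine StronglyMeasurable.integral_prod_right
      (f := fun (z : (Fin k → ℝ) × ℝ) (r : ℝ) => G' (z.1 + (z.2 * r) • ω)) ?_
    exact hG'm.comp_measurable (by fun_prop)
  have hset : MeasurableSet {z : ℝ × (Fin k → ℝ) |
      f' (z.2 + z.1 • ω) = f' z.2 + ∫ s in (0 : ℝ)..z.1, G' (z.2 + s • ω)} := by
    refine measurableSet_eq_fun (hf'm.measurable.comp (by fun_prop)) ?_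
    exact (hf'm.measurable.comp measurable_snd).add (hmeas.comp measurable_swap)
  have hall : ∀ᵐ t : ℝ, ∀ᵐ φ : Fin k → ℝ,
      f' (φ + t • ω) = f' φ + ∫ s in (0 : ℝ)..t, G' (φ + s • ω) := by
    refine Filter.Eventually.of_forall fun t => ?_
    filter_upwards [weak_ftc_fixed hf hG hw t, hff', (mp_add (t • ω)).quasiMeasurePreserving.ae hff',
      ae_ae_flow ω hGG'] with φ h1 h2 h3 h4
    rw [← h2, ← h3, ← horb φ h4]
    exact h1
  rw [Measure.ae_ae_comm hset] at hall
  filter_upwards [hall, hff', ae_ae_flow ω hff', ae_ae_flow ω hGG'] with φ h1 h2 h3 h4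
  filter_upwards [h1, h3] with t h5 h6
  rw [h6, h2, horb φ h4, h5]

/-! ### Christoffel algebra and regularity along one orbit -/

lemma contDiffOn_det {m : ℕ} {X : Type*} [NormedAddCommGroup X] [NormedSpace ℝ X] {n : WithTop ℕ∞}
    {s : Set X} {A : X → Matrix (Fin m) (Fin m) ℝ}
    (hA : ∀ i j, ContDiffOn ℝ n (fun y => A y i j) s) :
    ContDiffOn ℝ n (fun y => (A y).det) s := by
  simp_rw [Matrix.det_apply]
  refine ContDiffOn.sum fun σ _ => ?_
  refine ContDiffOn.const_smul _ ?_
  exact contDiffOn_prod fun i _ => hA _ _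

lemma contDiffOn_matrix_inv {m : ℕ} {X : Type*} [NormedAddCommGroup X] [NormedSpace ℝ X] {n : WithTop ℕ∞}
    {s : Set X} {A : X → Matrix (Fin m) (Fin m) ℝ}
    (hA : ∀ i j, ContDiffOn ℝ n (fun y => A y i j) s) (hdet : ∀ y ∈ s, (A y).det ≠ 0) (i j : Fin m) :
    ContDiffOn ℝ n (fun y => (A y)⁻¹ i j) s := by
  simp_rw [Matrix.inv_def, Matrix.smul_apply, Matrix.adjugate_apply, Ring.inverse_eq_inv',
    smul_eq_mul]
  refine ((contDiffOn_det hA).inv hdet).mul (contDiffOn_det fun a b => ?_)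
  by_cases h : a = j
  · subst h
    simpa using contDiffOn_const
  · simpa [Matrix.updateRow_apply, h] using hA a b

/-- The `i`-th component `½ ∑_{j,l} ∂_i g_{jl}(x) v^j v^l` of the `x`-gradient of the kinetic
energy. -/
noncomputable def kin {m : ℕ} (g : (Fin m → ℝ) → Matrix (Fin m) (Fin m) ℝ) (x v : Fin m → ℝ)
    (i : Fin m) : ℝ :=
  (1 / 2) * ∑ j, ∑ l, pd (fun y => g y j l) x i * v j * v l

lemma continuousOn_pd {m : ℕ} {U : Set (Fin m → ℝ)} (hU : IsOpen U) {f : (Fin m → ℝ) → ℝ}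
    (hf : ContDiffOn ℝ (⊤ : ℕ∞) f U) (j : Fin m) : ContinuousOn (fun x => pd f x j) U :=
  (hf.continuousOn_fderiv_of_isOpen hU (by simp)).clm_apply continuousOn_const

lemma pd_symm {m : ℕ} {U : Set (Fin m → ℝ)} (hU : IsOpen U)
    {g : (Fin m → ℝ) → Matrix (Fin m) (Fin m) ℝ} (hgpos : ∀ x ∈ U, (g x).PosDef)
    {x : Fin m → ℝ} (hx : x ∈ U) (i j l : Fin m) :
    pd (fun y => g y i j) x l = pd (fun y => g y j i) x l := by
  have h : (fun y => g y i j) =ᶠ[𝓝 x] fun y => g y j i := by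
    filter_upwards [hU.mem_nhds hx] with y hy
    simpa using (hgpos y hy).isHermitian.apply j i
  rw [pd, pd, h.fderiv_eq]

/-- The vector whose image under `g(x)⁻¹` is `Γ_x(a,b)`. -/
noncomputable def lowChr {m : ℕ} (g : (Fin m → ℝ) → Matrix (Fin m) (Fin m) ℝ)
    (x a b : Fin m → ℝ) : Fin m → ℝ :=
  fun l => (1 / 2) * ∑ j, ∑ k, (pd (fun y => g y l k) x j + pd (fun y => g y j l) x k
      - pd (fun y => g y j k) x l) * a j * b k

lemma christoffel_eq {m : ℕ} (g : (Fin m → ℝ) → Matrix (Fin m) (Fin m) ℝ) (x a b : Fin m → ℝ) :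
    christoffel g x a b = Matrix.mulVec (g x)⁻¹ (lowChr g x a b) := by
  ext i
  simp only [christoffel, lowChr, Matrix.mulVec, dotProduct]
  rw [Finset.mul_sum]
  exact Finset.sum_congr rfl fun l _ => by ring

lemma isUnit_det_of_posDef {m : ℕ} {A : Matrix (Fin m) (Fin m) ℝ} (h : A.PosDef) :
    IsUnit A.det := h.det_pos.ne'.isUnit

/-- In `(g a, Γ(a,b))` only the term with `∂_k g_{jl}` survives, the two others being exchanged
by `j ↔ l` and so cancelling; the result is the kinetic part of the Euler–Lagrange force paired with `b`. -/
lemma dotp_christoffel {m : ℕ} {U : Set (Fin m → ℝ)}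
    {g : (Fin m → ℝ) → Matrix (Fin m) (Fin m) ℝ} (hgpos : ∀ x ∈ U, (g x).PosDef)
    {x : Fin m → ℝ} (hx : x ∈ U) (a b : Fin m → ℝ) :
    dotp (Matrix.mulVec (g x) a) (christoffel g x a b) = ∑ i, kin g x a i * b i := by
  have hsym : (g x).transpose = g x := by
    have := (hgpos x hx).isHermitian
    simpa [Matrix.IsHermitian, Matrix.conjTranspose_eq_transpose_of_trivial] using this
  have h1 : dotp (Matrix.mulVec (g x) a) (christoffel g x a b) = dotProduct a (lowChr g x a b) := by
    change dotProduct _ _ = _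
    rw [christoffel_eq, Matrix.dotProduct_mulVec, ← Matrix.mulVec_transpose,
      Matrix.transpose_nonsing_inv, hsym, Matrix.mulVec_mulVec,
      Matrix.nonsing_inv_mul _ (isUnit_det_of_posDef (hgpos x hx)), Matrix.one_mulVec]
  rw [h1]
  simp only [dotProduct, lowChr, kin]
  have h2 : ∑ l, a l * ((1 / 2) * ∑ j, ∑ k, (pd (fun y => g y l k) x j + pd (fun y => g y j l) x k
      - pd (fun y => g y j k) x l) * a j * b k)
      = (1 / 2) * (∑ l, ∑ j, ∑ k, pd (fun y => g y l k) x j * a l * a j * b k)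
        + (1 / 2) * (∑ l, ∑ j, ∑ k, pd (fun y => g y j l) x k * a l * a j * b k)
        - (1 / 2) * (∑ l, ∑ j, ∑ k, pd (fun y => g y j k) x l * a l * a j * b k) := by
    simp only [Finset.mul_sum, ← Finset.sum_add_distrib, ← Finset.sum_sub_distrib]
    refine Finset.sum_congr rfl fun l _ => Finset.sum_congr rfl fun j _ =>
      Finset.sum_congr rfl fun k _ => by ring
  have h3 : (∑ l, ∑ j, ∑ k, pd (fun y => g y l k) x j * a l * a j * b k)
      = ∑ l, ∑ j, ∑ k, pd (fun y => g y j k) x l * a l * a j * b k := by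
    rw [Finset.sum_comm]
    refine Finset.sum_congr rfl fun l _ => Finset.sum_congr rfl fun j _ =>
      Finset.sum_congr rfl fun k _ => by ring
  rw [h2, h3, add_sub_right_comm, sub_self, zero_add]
  simp only [Finset.mul_sum, Finset.sum_mul]
  rw [Finset.sum_comm]
  refine (Finset.sum_congr rfl fun j _ => Finset.sum_comm).trans ?_
  rw [Finset.sum_comm]
  refine Finset.sum_congr rfl fun i _ => Finset.sum_congr rfl fun j _ =>
    Finset.sum_congr rfl fun l _ => by ring

lemma lowChr_self {m : ℕ} {U : Set (Fin m → ℝ)} (hU : IsOpen U)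
    {g : (Fin m → ℝ) → Matrix (Fin m) (Fin m) ℝ} (hgpos : ∀ x ∈ U, (g x).PosDef)
    {x : Fin m → ℝ} (hx : x ∈ U) (a : Fin m → ℝ) (i : Fin m) :
    lowChr g x a a i = (∑ j, ∑ l, pd (fun y => g y i j) x l * a l * a j) - kin g x a i := by
  simp only [lowChr, kin]
  have h2 : ∑ j, ∑ k, (pd (fun y => g y i k) x j + pd (fun y => g y j i) x k
      - pd (fun y => g y j k) x i) * a j * a k
      = (∑ j, ∑ k, pd (fun y => g y i k) x j * a j * a k)
        + (∑ j, ∑ k, pd (fun y => g y i j) x k * a k * a j)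
        - (∑ j, ∑ k, pd (fun y => g y j k) x i * a j * a k) := by
    simp only [← Finset.sum_add_distrib, ← Finset.sum_sub_distrib]
    refine Finset.sum_congr rfl fun j _ => Finset.sum_congr rfl fun k _ => ?_
    rw [pd_symm hU hgpos hx j i k]; ring
  rw [h2, Finset.sum_comm]
  ring

/-- One-dimensional bootstrap along an orbit. If `x = x₀ + ∫ v` and `p = p₀ + ∫ F` are continuous,
`p = g(x) v` and `F = ½ ∂g(v,v) + w` almost everywhere, then `v` agrees a.e. with the continuous
function `g(x)⁻¹p`, hence `x` and then `p` are `C¹`, hence `ẋ = g(x)⁻¹p` is `C¹`; differentiating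
`p = g(x)ẋ` gives the Euler–Lagrange equations. -/
lemma orbit_solution {m : ℕ} {U : Set (Fin m → ℝ)} (hU : IsOpen U)
    {g : (Fin m → ℝ) → Matrix (Fin m) (Fin m) ℝ}
    (hg : ∀ i j, ContDiffOn ℝ (⊤ : ℕ∞) (fun y => g y i j) U)
    (hgpos : ∀ x ∈ U, (g x).PosDef)
    {w : ℝ → (Fin m → ℝ) → Fin m → ℝ}
    (hw : ∀ i, ContinuousOn (fun z : ℝ × (Fin m → ℝ) => w z.1 z.2 i) (univ ×ˢ U))
    {x p v F : ℝ → Fin m → ℝ} {x0 p0 : Fin m → ℝ}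
    (hxc : Continuous x) (hpc : Continuous p)
    (hx : ∀ t i, x t i = x0 i + ∫ s in (0 : ℝ)..t, v s i)
    (hp : ∀ t i, p t i = p0 i + ∫ s in (0 : ℝ)..t, F s i)
    (hxU : ∀ t, x t ∈ U)
    (hpv : ∀ᵐ t, p t = Matrix.mulVec (g (x t)) (v t))
    (hF : ∀ᵐ t, ∀ i, F t i = kin g (x t) (v t) i + w t (x t) i) :
    ContDiff ℝ 2 x ∧ ∀ t, deriv (deriv x) t + christoffel g (x t) (deriv x t) (deriv x t)
      = Matrix.mulVec (g (x t))⁻¹ (w t (x t)) := by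
  have hunit : ∀ t, IsUnit (g (x t)).det := fun t => isUnit_det_of_posDef (hgpos _ (hxU t))
  have hinv : ∀ i j, ContDiffOn ℝ (⊤ : ℕ∞) (fun y => (g y)⁻¹ i j) U :=
    contDiffOn_matrix_inv hg fun y hy => (hgpos y hy).det_pos.ne'
  set q : ℝ → Fin m → ℝ := fun t => Matrix.mulVec (g (x t))⁻¹ (p t) with hq
  have hgq : ∀ t, Matrix.mulVec (g (x t)) (q t) = p t := fun t => by
    rw [hq, Matrix.mulVec_mulVec, Matrix.mul_nonsing_inv _ (hunit t), Matrix.one_mulVec]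
  have hqv : ∀ᵐ t, v t = q t := by
    filter_upwards [hpv] with t ht
    rw [hq]
    simp only
    rw [ht, Matrix.mulVec_mulVec, Matrix.nonsing_inv_mul _ (hunit t), Matrix.one_mulVec]
  have hqc : Continuous q := by
    refine continuous_pi fun i => ?_
    simp only [hq, Matrix.mulVec, dotProduct]
    refine continuous_finsetSum _ fun j _ => ?_
    exact ((hinv i j).continuousOn.comp_continuous hxc hxU).mul ((continuous_apply j).comp hpc)
  have hqci : ∀ i, Continuous fun t => q t i := fun i => (continuous_apply i).comp hqc
  have hxd : ∀ t, HasDerivAt x (q t) t := by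
    intro t
    rw [hasDerivAt_pi]
    intro i
    have h1 : (fun t => x t i) = fun t => x0 i + ∫ s in (0 : ℝ)..t, q s i := by
      ext t
      rw [hx]
      congr 1
      exact intervalIntegral.integral_congr_ae (hqv.mono fun s hs _ => by rw [hs])
    rw [h1]
    exact (((hqci i).integral_hasStrictDerivAt 0 t).hasDerivAt).const_add _
  set F' : ℝ → Fin m → ℝ := fun t i => kin g (x t) (q t) i + w t (x t) i with hF'
  have hF'c : ∀ i, Continuous fun t => F' t i := by
    intro i
    refine Continuous.add ?_ ?_
    · refine continuous_const.mul (continuous_finsetSum _ fun j _ => continuous_finsetSum _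
        fun l _ => ?_)
      exact (((continuousOn_pd hU (hg j l) i).comp_continuous hxc hxU).mul (hqci j)).mul (hqci l)
    · exact (hw i).comp_continuous (continuous_id.prodMk hxc) fun t => ⟨mem_univ _, hxU t⟩
  have hpd : ∀ t, HasDerivAt p (F' t) t := by
    intro t
    rw [hasDerivAt_pi]
    intro i
    have h1 : (fun t => p t i) = fun t => p0 i + ∫ s in (0 : ℝ)..t, F' s i := by
      ext t
      rw [hp]
      congr 1
      refine intervalIntegral.integral_congr_ae ?_
      filter_upwards [hqv, hF] with s hs1 hs2 _
      rw [hs2 i, hs1]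
    rw [h1]
    exact (((hF'c i).integral_hasStrictDerivAt 0 t).hasDerivAt).const_add _
  have hdx : deriv x = q := funext fun t => (hxd t).deriv
  have hx1 : ContDiff ℝ 1 x := by
    rw [contDiff_one_iff_deriv]
    exact ⟨fun t => (hxd t).differentiableAt, hdx ▸ hqc⟩
  have hp1 : ContDiff ℝ 1 p := by
    rw [contDiff_one_iff_deriv]
    refine ⟨fun t => (hpd t).differentiableAt, ?_⟩
    rw [show deriv p = F' from funext fun t => (hpd t).deriv]
    exact continuous_pi hF'c
  have hq1 : ContDiff ℝ 1 q := by
    rw [contDiff_pi]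
    intro i
    simp only [hq, Matrix.mulVec, dotProduct]
    refine ContDiff.sum fun j _ => ContDiff.mul ?_ ((contDiff_pi.1 hp1) j)
    rw [contDiff_iff_contDiffAt]
    intro t
    have h1 : ContDiffAt ℝ 1 (fun y => (g y)⁻¹ i j) (x t) :=
      (((hinv i j).of_le (by simp)).contDiffAt (hU.mem_nhds (hxU t)))
    exact h1.comp t hx1.contDiffAt
  refine ⟨?_, fun t => ?_⟩
  · rw [show (2 : WithTop ℕ∞) = 1 + 1 by norm_num, contDiff_succ_iff_deriv]
    exact ⟨hx1.differentiable (by simp), by simp, hdx ▸ hq1⟩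
  · rw [hdx]
    have hqd : HasDerivAt q (deriv q t) t := (hq1.differentiable (by simp) t).hasDerivAt
    have hqdi := hasDerivAt_pi.1 hqd
    have hgd : ∀ i j, HasDerivAt (fun t => g (x t) i j)
        (∑ l, pd (fun y => g y i j) (x t) l * q t l) t := by
      intro i j
      have h1 : HasFDerivAt (fun y => g y i j) (fderiv ℝ (fun y => g y i j) (x t)) (x t) :=
        ((((hg i j).contDiffAt (hU.mem_nhds (hxU t))).differentiableAt (by simp))).hasFDerivAt
      refine (h1.comp_hasDerivAt t (hxd t)).congr_deriv ?_
      conv_lhs => rw [pi_eq_sum_univ' (q t)]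
      simp only [map_sum, map_smul, smul_eq_mul, pd, mul_comm]
    have hbal : Matrix.mulVec (g (x t)) (deriv q t) + lowChr g (x t) (q t) (q t) = w t (x t) := by
      ext i
      have h1 : HasDerivAt (fun t => ∑ j, g (x t) i j * q t j)
          (∑ j, ((∑ l, pd (fun y => g y i j) (x t) l * q t l) * q t j
            + g (x t) i j * deriv q t j)) t :=
        HasDerivAt.fun_sum fun j _ => (hgd i j).mul (hqdi j)
      have h2 : (fun t => ∑ j, g (x t) i j * q t j) = fun t => p t i :=
        funext fun t => congrFun (hgq t) i
      rw [h2] at h1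
      have h3 := h1.unique (hasDerivAt_pi.1 (hpd t) i)
      rw [Pi.add_apply, lowChr_self hU hgpos (hxU t)]
      simp only [Matrix.mulVec, dotProduct]
      rw [Finset.sum_add_distrib] at h3
      simp only [Finset.sum_mul, hF'] at h3
      linarith
    rw [christoffel_eq, ← hbal, Matrix.mulVec_add, Matrix.mulVec_mulVec,
      Matrix.nonsing_inv_mul _ (hunit t), Matrix.one_mulVec]

/-! ### Integrability and scalar test functions -/

lemma gradW_continuousOn {k m : ℕ} {U : Set (Fin m → ℝ)} (hU : IsOpen U)
    {W : (Fin k → ℝ) → (Fin m → ℝ) → ℝ}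
    (hW : ContDiffOn ℝ (⊤ : ℕ∞) (fun p : (Fin k → ℝ) × (Fin m → ℝ) => W p.1 p.2)
      (Set.univ ×ˢ U)) (i : Fin m) :
    ContinuousOn (fun z : (Fin k → ℝ) × (Fin m → ℝ) => gradW W z.1 z.2 i) (univ ×ˢ U) := by
  have hO : IsOpen ((univ : Set (Fin k → ℝ)) ×ˢ U) := isOpen_univ.prod hU
  have h1 : ContinuousOn (fun z => fderiv ℝ (fun p : (Fin k → ℝ) × (Fin m → ℝ) => W p.1 p.2) z
      (0, Pi.single i 1)) (univ ×ˢ U) :=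
    (hW.continuousOn_fderiv_of_isOpen hO (by simp)).clm_apply continuousOn_const
  refine h1.congr fun z hz => ?_
  have h2 : HasFDerivAt (fun p : (Fin k → ℝ) × (Fin m → ℝ) => W p.1 p.2)
      (fderiv ℝ (fun p : (Fin k → ℝ) × (Fin m → ℝ) => W p.1 p.2) z) (z.1, z.2) :=
    ((hW.contDiffAt (hO.mem_nhds hz)).differentiableAt (by simp)).hasFDerivAt
  have h3 := (h2.comp z.2 (hasFDerivAt_prodMk_right z.1 z.2)).fderiv
  have h4 : ((fun p : (Fin k → ℝ) × (Fin m → ℝ) => W p.1 p.2) ∘ fun x => (z.1, x)) = W z.1 := rfl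
  rw [h4] at h3
  simp only [gradW, h3]
  simp

/-- A function continuous on a compact set `K` becomes a.e. measurable and essentially bounded
when composed with a measurable map that lands a.e. in `K`. -/
lemma comp_compact {α X : Type*} [MeasurableSpace α] {μ : Measure α} [TopologicalSpace X] [T2Space X]
    [MeasurableSpace X] [BorelSpace X] {K : Set X} (hK : IsCompact K) {f : X → ℝ}
    (hf : ContinuousOn f K) {w : α → X} (hw : Measurable w) (hwK : ∀ᵐ a ∂μ, w a ∈ K) :
    AEStronglyMeasurable (fun a => f (w a)) μ ∧ ∃ M : ℝ, ∀ᵐ a ∂μ, ‖f (w a)‖ ≤ M := by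
  refine ⟨?_, ?_⟩
  · have hm : Measurable (K.indicator f) := by
      classical
      rw [← Set.piecewise_eq_indicator]
      exact hf.measurable_piecewise continuousOn_const hK.isClosed.measurableSet
    refine AEStronglyMeasurable.congr (hm.comp hw).aestronglyMeasurable ?_
    filter_upwards [hwK] with a ha
    simp [ha]
  · obtain ⟨M, hM⟩ := hK.exists_bound_of_continuousOn hf
    exact ⟨M, hwK.mono fun a ha => hM _ ha⟩

lemma sq_le_dotp {m : ℕ} (a : Fin m → ℝ) (i : Fin m) : a i * a i ≤ dotp a a :=
  Finset.single_le_sum (f := fun i => a i * a i) (fun j _ => mul_self_nonneg (a j))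
    (Finset.mem_univ i)

lemma integrable_mul_of_dotp {α : Type*} [MeasurableSpace α] {μ : Measure α} {m : ℕ}
    {v : α → Fin m → ℝ} (hv : Measurable v) (h : Integrable (fun a => dotp (v a) (v a)) μ)
    (i j : Fin m) : Integrable (fun a => v a i * v a j) μ := by
  refine h.mono (((measurable_pi_apply i).comp hv).mul
    ((measurable_pi_apply j).comp hv)).aestronglyMeasurable (Filter.Eventually.of_forall fun a => ?_)
  have h1 := sq_le_dotp (v a) i
  have h2 := sq_le_dotp (v a) j
  rw [Real.norm_eq_abs, Real.norm_eq_abs]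
  refine le_trans (abs_le.2 ⟨?_, ?_⟩) (le_abs_self _)
  · nlinarith [sq_nonneg (v a i + v a j)]
  · nlinarith [sq_nonneg (v a i - v a j)]

lemma integrable_of_dotp {α : Type*} [MeasurableSpace α] {μ : Measure α} [IsFiniteMeasure μ] {m : ℕ}
    {v : α → Fin m → ℝ} (hv : Measurable v) (h : Integrable (fun a => dotp (v a) (v a)) μ)
    (i : Fin m) : Integrable (fun a => v a i) μ := by
  refine ((integrable_const (1 : ℝ)).add h).mono
    ((measurable_pi_apply i).comp hv).aestronglyMeasurable (Filter.Eventually.of_forall fun a => ?_)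
  have h1 := sq_le_dotp (v a) i
  rw [Real.norm_eq_abs, Real.norm_eq_abs]
  refine le_trans (abs_le.2 ⟨?_, ?_⟩) (le_abs_self _)
  · simp only [Pi.add_apply]
    nlinarith [sq_nonneg (v a i + 1)]
  · simp only [Pi.add_apply]
    nlinarith [sq_nonneg (v a i - 1)]

lemma dirDeriv_single {k m : ℕ} (ω : Fin k → ℝ) {η : (Fin k → ℝ) → ℝ}
    (hη : Differentiable ℝ η) (i : Fin m) (φ : Fin k → ℝ) :
    dirDeriv ω (fun φ => (Pi.single i (η φ) : Fin m → ℝ)) φ = Pi.single i (dirDeriv ω η φ) := by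
  have h1 : DifferentiableAt ℝ (fun t : ℝ => η (φ + t • ω)) 0 :=
    (hη _).comp _ (by fun_prop)
  exact ((ContinuousLinearMap.single ℝ (fun _ : Fin m => ℝ) i).hasFDerivAt.comp_hasDerivAt 0
    h1.hasDerivAt).deriv

lemma contDiff_pi_single {k m : ℕ} {η : (Fin k → ℝ) → ℝ} {n : WithTop ℕ∞}
    (hη : ContDiff ℝ n η) (i : Fin m) :
    ContDiff ℝ n (fun φ => (Pi.single i (η φ) : Fin m → ℝ)) :=
  (ContinuousLinearMap.single ℝ (fun _ : Fin m => ℝ) i).contDiff.comp hη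

lemma dotp_single {m : ℕ} (a : Fin m → ℝ) (i : Fin m) (c : ℝ) :
    dotp a (Pi.single i c) = a i * c := by
  change dotProduct _ _ = _
  exact dotProduct_single _ _ _

lemma continuous_dirDeriv {k : ℕ} (ω : Fin k → ℝ) {η : (Fin k → ℝ) → ℝ}
    (hη : ContDiff ℝ (⊤ : ℕ∞) η) : Continuous (dirDeriv ω η) := by
  have : dirDeriv ω η = fun φ => fderiv ℝ η φ ω :=
    funext fun φ => dirDeriv_eq_fderiv (hη.differentiable (by simp) φ)
  rw [this]
  exact (hη.continuous_fderiv (by simp)).clm_apply continuous_const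

/-! ### The representative along orbits -/

open Classical in
/-- The precise representative of `u` along the flow: where the orbit `t ↦ u(φ+tω)` agrees for a.e.
`t` with a continuous function, its value at time `0`; elsewhere `u(φ)`. -/
noncomputable def preciseRep {k m : ℕ} (ω : Fin k → ℝ) (u : (Fin k → ℝ) → (Fin m → ℝ))
    (φ : Fin k → ℝ) : Fin m → ℝ :=
  if h : ∃ y : ℝ → Fin m → ℝ, Continuous y ∧ ∀ᵐ t : ℝ, y t = u (φ + t • ω) then h.choose 0 else u φ

lemma preciseRep_zero {k m : ℕ} {ω : Fin k → ℝ} {u : (Fin k → ℝ) → (Fin m → ℝ)}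
    {φ : Fin k → ℝ} {y : ℝ → Fin m → ℝ} (hy : Continuous y)
    (hyu : ∀ᵐ t : ℝ, y t = u (φ + t • ω)) : preciseRep ω u φ = y 0 := by
  have h : ∃ y : ℝ → Fin m → ℝ, Continuous y ∧ ∀ᵐ t : ℝ, y t = u (φ + t • ω) := ⟨y, hy, hyu⟩
  rw [preciseRep, dif_pos h]
  have heq : h.choose = y := by
    rw [← Continuous.ae_eq_iff_eq volume h.choose_spec.1 hy]
    filter_upwards [h.choose_spec.2, hyu] with t h1 h2
    rw [h1, h2]
  rw [heq]

lemma preciseRep_orbit {k m : ℕ} {ω : Fin k → ℝ} {u : (Fin k → ℝ) → (Fin m → ℝ)}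
    {φ : Fin k → ℝ} {y : ℝ → Fin m → ℝ} (hy : Continuous y)
    (hyu : ∀ᵐ t : ℝ, y t = u (φ + t • ω)) (t : ℝ) : preciseRep ω u (φ + t • ω) = y t := by
  have h1 := (measurePreserving_add_right (volume : Measure ℝ) t).quasiMeasurePreserving.ae hyu
  have := preciseRep_zero (ω := ω) (u := u) (φ := φ + t • ω) (y := fun s => y (s + t))
    (by fun_prop) (by
      filter_upwards [h1] with s hs
      rw [hs, add_smul, add_assoc, add_comm (t • ω)])
  simpa using this

lemma preciseRep_per {k m : ℕ} {ω : Fin k → ℝ} {u : (Fin k → ℝ) → (Fin m → ℝ)} (hu : TorusPer u) :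
    TorusPer (preciseRep ω u) := by
  intro φ n
  have h : ∀ t : ℝ, u ((φ + fun i => 2 * Real.pi * (n i : ℝ)) + t • ω) = u (φ + t • ω) := by
    intro t
    rw [add_right_comm]
    exact hu _ n
  by_cases hy : ∃ y : ℝ → Fin m → ℝ, Continuous y ∧ ∀ᵐ t : ℝ, y t = u (φ + t • ω)
  · obtain ⟨y, hyc, hyu⟩ := hy
    rw [preciseRep_zero hyc hyu, preciseRep_zero hyc (hyu.mono fun t ht => ht.trans (h t).symm)]
  · have hy' := hy
    simp_rw [← h] at hy'
    rw [preciseRep, preciseRep, dif_neg hy, dif_neg hy', hu φ n]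

/-! ### Weak solutions are classical along almost every orbit -/

set_option maxHeartbeats 1000000 in
/-- Weak quasiperiodic solutions restrict to classical solutions along almost every
trajectory of the linear flow (single-chart form): if `u ∈ H¹_ω(𝕋^k;ℝ^m)` takes values
a.e. in a compact `C ⊂ U` and satisfies the weak variational identity, then some
representative `u'` of `u` is such that for a.e. `φ` the function `t ↦ u'(φ+tω)` takes
values in `C`, is `C²` on all of `ℝ`, and solves the Euler–Lagrange equations. -/
theorem stmt1 {k m : ℕ} (ω : Fin k → ℝ)
    (U : Set (Fin m → ℝ)) (hU : IsOpen U)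
    (g : (Fin m → ℝ) → Matrix (Fin m) (Fin m) ℝ)
    (hg : ∀ i j, ContDiffOn ℝ (⊤ : ℕ∞) (fun y => g y i j) U)
    (hgpos : ∀ x ∈ U, (g x).PosDef)
    (W : (Fin k → ℝ) → (Fin m → ℝ) → ℝ)
    (hWper : ∀ x, TorusPer (fun φ => W φ x))
    (hW : ContDiffOn ℝ (⊤ : ℕ∞) (fun p : (Fin k → ℝ) × (Fin m → ℝ) => W p.1 p.2)
      (Set.univ ×ˢ U))
    (C : Set (Fin m → ℝ)) (hC : IsCompact C) (hCU : C ⊆ U)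
    -- `u ∈ H¹_ω(𝕋^k;ℝ^m)` with weak directional derivative `Du`:
    (u Du : (Fin k → ℝ) → (Fin m → ℝ)) (huper : TorusPer u) (hDuper : TorusPer Du)
    (humeas : Measurable u) (hDumeas : Measurable Du)
    (huL2 : IntegrableOn (fun φ => dotp (u φ) (u φ)) (torusBox k))
    (hDuL2 : IntegrableOn (fun φ => dotp (Du φ) (Du φ)) (torusBox k))
    (hweakder : ∀ h : (Fin k → ℝ) → (Fin m → ℝ), TorusPer h → ContDiff ℝ 1 h →
      ∫ φ in torusBox k, dotp (u φ) (dirDeriv ω h φ)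
        = - ∫ φ in torusBox k, dotp (Du φ) (h φ))
    -- `u` takes values almost everywhere in `C`:
    (huC : ∀ᵐ φ : Fin k → ℝ, u φ ∈ C)
    -- the weak variational identity for every smooth `h : 𝕋^k → ℝ^m`:
    (hweak : ∀ h : (Fin k → ℝ) → (Fin m → ℝ), TorusPer h → ContDiff ℝ (⊤ : ℕ∞) h →
      ∫ φ in torusBox k,
        (dotp (Matrix.mulVec (g (u φ)) (Du φ))
            (dirDeriv ω h φ + christoffel g (u φ) (Du φ) (h φ))
          + dotp (gradW W φ (u φ)) (h φ)) = 0) :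
    ∃ u' : (Fin k → ℝ) → (Fin m → ℝ), TorusPer u' ∧ (∀ᵐ φ : Fin k → ℝ, u' φ = u φ) ∧
      (∀ᵐ φ : Fin k → ℝ,
        (∀ t : ℝ, u' (φ + t • ω) ∈ C) ∧
        ContDiff ℝ 2 (fun t : ℝ => u' (φ + t • ω)) ∧
        (∀ t : ℝ,
          deriv (deriv (fun s : ℝ => u' (φ + s • ω))) t
            + christoffel g (u' (φ + t • ω)) (deriv (fun s : ℝ => u' (φ + s • ω)) t)
                (deriv (fun s : ℝ => u' (φ + s • ω)) t)
            = Matrix.mulVec (g (u' (φ + t • ω)))⁻¹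
                (gradW W (φ + t • ω) (u' (φ + t • ω))))) := by
  have hfin : IsFiniteMeasure (volume.restrict (torusBox k)) :=
    isFiniteMeasure_restrict.2 (isCompact_Icc.measure_lt_top.ne)
  have huCbox : ∀ᵐ φ ∂(volume.restrict (torusBox k)), u φ ∈ C := ae_restrict_of_ae huC
  -- momentum `P = g(u) D_ω u` and force `F = ½ ∂g(u)(D_ω u, D_ω u) + W'`
  set P : Fin m → (Fin k → ℝ) → ℝ := fun i φ => Matrix.mulVec (g (u φ)) (Du φ) i with hP
  set F : Fin m → (Fin k → ℝ) → ℝ := fun i φ => kin g (u φ) (Du φ) i + gradW W φ (u φ) i with hF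
  have hPper : ∀ i, TorusPer (P i) := fun i φ n => by
    simp only [hP, huper φ n, hDuper φ n]
  have hFper : ∀ i, TorusPer (F i) := fun i φ n => by
    have hWn : W (φ + fun i => 2 * Real.pi * (n i : ℝ)) = W φ := funext fun x => hWper x φ n
    simp only [hF, huper φ n, hDuper φ n, gradW, hWn]
  have huperi : ∀ i, TorusPer fun φ => u φ i := fun i φ n => by simp only [huper φ n]
  have hDuperi : ∀ i, TorusPer fun φ => Du φ i := fun i φ n => by simp only [hDuper φ n]
  have hub : ∀ i, IntegrableOn (fun φ => u φ i) (torusBox k) := fun i =>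
    integrable_of_dotp humeas huL2 i
  have hDub : ∀ i, IntegrableOn (fun φ => Du φ i) (torusBox k) := fun i =>
    integrable_of_dotp hDumeas hDuL2 i
  have hPb : ∀ i, IntegrableOn (P i) (torusBox k) := by
    intro i
    have hi : P i = fun φ => ∑ j, g (u φ) i j * Du φ j := rfl
    rw [hi]
    refine integrable_finsetSum _ fun j _ => ?_
    obtain ⟨h1, M, h2⟩ := comp_compact hC ((hg i j).continuousOn.mono hCU) humeas huCbox
    exact (hDub j).bdd_mul h1 h2
  have hFb : ∀ i, IntegrableOn (F i) (torusBox k) := by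
    intro i
    have hi1 : IntegrableOn (fun φ => kin g (u φ) (Du φ) i) (torusBox k) := by
      refine Integrable.const_mul ?_ _
      refine integrable_finsetSum _ fun j _ => integrable_finsetSum _ fun l _ => ?_
      obtain ⟨h1, M, h2⟩ := comp_compact hC ((continuousOn_pd hU (hg j l) i).mono hCU) humeas huCbox
      simp_rw [mul_assoc]
      exact (integrable_mul_of_dotp hDumeas hDuL2 j l).bdd_mul h1 h2
    have hi2 : IntegrableOn (fun φ => gradW W φ (u φ) i) (torusBox k) := by
      have hK : IsCompact (torusBox k ×ˢ C) := isCompact_Icc.prod hC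
      obtain ⟨h1, M, h2⟩ := comp_compact (μ := volume.restrict (torusBox k)) hK
        ((gradW_continuousOn hU hW i).mono (prod_mono (subset_univ _) hCU))
        (measurable_id.prodMk humeas) (by
          filter_upwards [huCbox, ae_restrict_mem measurableSet_box] with φ h1 h2
          exact ⟨h2, h1⟩)
      exact Integrable.of_bound h1 M h2
    exact hi1.add hi2
  have huloc := fun i => locallyIntegrable_of_torusPer (huperi i) (hub i)
  have hDuloc := fun i => locallyIntegrable_of_torusPer (hDuperi i) (hDub i)
  have hPloc := fun i => locallyIntegrable_of_torusPer (hPper i) (hPb i)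
  have hFloc := fun i => locallyIntegrable_of_torusPer (hFper i) (hFb i)
  have hsingle_per : ∀ (i : Fin m) {η : (Fin k → ℝ) → ℝ}, TorusPer η →
      TorusPer fun φ => (Pi.single i (η φ) : Fin m → ℝ) := fun i η h φ n => by
    simp only [h φ n]
  -- scalar weak identities, from test functions with a single non-zero component
  have hwu : ∀ i, ∀ η : (Fin k → ℝ) → ℝ, TorusPer η → ContDiff ℝ (⊤ : ℕ∞) η →
      ∫ φ in torusBox k, (u φ i * dirDeriv ω η φ + Du φ i * η φ) = 0 := by
    intro i η hη hηs
    have h := hweakder _ (hsingle_per i hη) (contDiff_pi_single (hηs.of_le (by simp)) i)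
    simp_rw [dirDeriv_single ω (hηs.differentiable (by simp)) i, dotp_single] at h
    rw [integral_add, h, neg_add_cancel]
    · exact (hub i).mul_continuousOn (continuous_dirDeriv ω hηs).continuousOn isCompact_Icc
    · exact (hDub i).mul_continuousOn hηs.continuous.continuousOn isCompact_Icc
  have hwP : ∀ i, ∀ η : (Fin k → ℝ) → ℝ, TorusPer η → ContDiff ℝ (⊤ : ℕ∞) η →
      ∫ φ in torusBox k, (P i φ * dirDeriv ω η φ + F i φ * η φ) = 0 := by
    intro i η hη hηs
    rw [← hweak _ (hsingle_per i hη) (contDiff_pi_single hηs i)]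
    refine integral_congr_ae ?_
    filter_upwards [huCbox] with φ hφ
    have hadd : ∀ a b c : Fin m → ℝ, dotp a (b + c) = dotp a b + dotp a c := fun a b c =>
      dotProduct_add a b c
    rw [hadd, dotp_christoffel hgpos (hCU hφ), dirDeriv_single ω (hηs.differentiable (by simp)) i,
      dotp_single, dotp_single]
    have hs : ∑ j, kin g (u φ) (Du φ) j * (Pi.single i (η φ) : Fin m → ℝ) j
        = kin g (u φ) (Du φ) i * η φ := dotp_single _ i _
    rw [hs]
    simp only [hP, hF]
    ring
  have hftcu : ∀ᵐ φ : Fin k → ℝ, ∀ i, ∀ᵐ t : ℝ,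
      u (φ + t • ω) i = u φ i + ∫ s in (0 : ℝ)..t, Du (φ + s • ω) i :=
    ae_all_iff.2 fun i => weak_ftc (huloc i) (hDuloc i) fun η h1 h2 =>
      weak_unfold (huperi i) (hDuperi i) (huloc i) (hDuloc i) (hwu i) h1 h2
  have hftcP : ∀ᵐ φ : Fin k → ℝ, ∀ i, ∀ᵐ t : ℝ,
      P i (φ + t • ω) = P i φ + ∫ s in (0 : ℝ)..t, F i (φ + s • ω) :=
    ae_all_iff.2 fun i => weak_ftc (hPloc i) (hFloc i) fun η h1 h2 =>
      weak_unfold (hPper i) (hFper i) (hPloc i) (hFloc i) (hwP i) h1 h2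
  have hDuorb : ∀ᵐ φ : Fin k → ℝ, ∀ i, LocallyIntegrable fun s : ℝ => Du (φ + s • ω) i :=
    ae_all_iff.2 fun i => ae_locallyIntegrable_orbit ω (hDuloc i)
  have hForb : ∀ᵐ φ : Fin k → ℝ, ∀ i, LocallyIntegrable fun s : ℝ => F i (φ + s • ω) :=
    ae_all_iff.2 fun i => ae_locallyIntegrable_orbit ω (hFloc i)
  have hprim : ∀ (f : ℝ → ℝ) (c : ℝ), LocallyIntegrable f →
      Continuous fun t => c + ∫ s in (0 : ℝ)..t, f s := fun f c hf =>
    continuous_const.add (intervalIntegral.continuous_primitive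
      (fun a b => (hf.integrableOn_isCompact isCompact_uIcc).intervalIntegrable) 0)
  have hxcont : ∀ φ : Fin k → ℝ, (∀ i, LocallyIntegrable fun s : ℝ => Du (φ + s • ω) i) →
      Continuous fun (t : ℝ) (i : Fin m) => u φ i + ∫ s in (0 : ℝ)..t, Du (φ + s • ω) i :=
    fun φ h => continuous_pi fun i => hprim _ _ (h i)
  have hxae : ∀ φ : Fin k → ℝ, (∀ i, ∀ᵐ t : ℝ,
      u (φ + t • ω) i = u φ i + ∫ s in (0 : ℝ)..t, Du (φ + s • ω) i) → ∀ᵐ t : ℝ,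
      (fun i : Fin m => u φ i + ∫ s in (0 : ℝ)..t, Du (φ + s • ω) i) = u (φ + t • ω) :=
    fun φ h => (ae_all_iff.2 h).mono fun t ht => funext fun i => (ht i).symm
  refine ⟨preciseRep ω u, preciseRep_per huper, ?_, ?_⟩
  · filter_upwards [hftcu, hDuorb] with φ h1 h3
    rw [preciseRep_zero (hxcont φ h3) (hxae φ h1)]
    simp
  · filter_upwards [hftcu, hftcP, hDuorb, hForb, ae_ae_flow ω huC] with φ h1 h2 h3 h4 h5
    set x : ℝ → Fin m → ℝ := fun t i => u φ i + ∫ s in (0 : ℝ)..t, Du (φ + s • ω) i with hx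
    have hxc : Continuous x := hxcont φ h3
    have hxu : ∀ᵐ t : ℝ, x t = u (φ + t • ω) := hxae φ h1
    have horb : ∀ t, preciseRep ω u (φ + t • ω) = x t := preciseRep_orbit hxc hxu
    have hxC : ∀ t, x t ∈ C := by
      have hd : Dense {t | x t ∈ C} := by
        refine Measure.dense_of_ae (μ := volume) ?_
        filter_upwards [hxu, h5] with t ht1 ht2
        rwa [ht1]
      have hcl : IsClosed {t | x t ∈ C} := hC.isClosed.preimage hxc
      intro t
      have ht : t ∈ closure {t | x t ∈ C} := hd t
      rwa [hcl.closure_eq] at ht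
    have hsol := orbit_solution hU hg hgpos (w := fun t y => gradW W (φ + t • ω) y)
      (fun i => (gradW_continuousOn hU hW i).comp
        (f := fun z : ℝ × (Fin m → ℝ) => (φ + z.1 • ω, z.2)) (by fun_prop)
        fun z hz => ⟨mem_univ _, hz.2⟩)
      (p := fun t i => P i φ + ∫ s in (0 : ℝ)..t, F i (φ + s • ω))
      (v := fun t => Du (φ + t • ω)) (F := fun t i => F i (φ + t • ω))
      hxc (continuous_pi fun i => hprim _ _ (h4 i)) (fun _ _ => rfl) (fun _ _ => rfl)
      (fun t => hCU (hxC t))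
      (by
        filter_upwards [hxu, ae_all_iff.2 h2] with t ht1 ht2
        ext i
        rw [← ht2 i, ht1])
      (by
        filter_upwards [hxu] with t ht1 i
        rw [ht1])
    simp_rw [horb]
    exact ⟨hxC, hsol⟩
end

section
/- Let M > 0 and let Φ: [0,1] × [0,∞) → ℝ^m be continuous, differentiable in its first variable with ‖∂_s Φ(s,t)‖ ≤ M for all (s,t) ∈ [0,1] × [0,∞), and suppose ∫₀^∞ ∫₀¹ ‖Φ(s,t)‖² ds dt < ∞. Then there exists a sequence t_k → ∞ such that sup_{s∈[0,1]} ‖Φ(s, t_k)‖ → 0 as k → ∞. -/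
/-!
The slice energy `G t = ∫₀¹ ‖Φ(s,t)‖² ds` is integrable on `[0,∞)` by Fubini, so it cannot stay
above a positive constant on any half-line `[T,∞)`: there are arbitrarily large `t` with `G t`
as small as desired (`exists_ge_lt_of_integrableOn`). Each slice `Φ(·,t)` is `M`-Lipschitz, so a
value of norm greater than `ε` forces norm at least `ε/2` on a subinterval of `[0,1]` of length
`δ = min (ε/(2M)) (1/2)`, hence `G t ≥ δ (ε/2)²` (`norm_le_of_integral_lt`). A small slice energy
thus makes the whole slice uniformly small.
-/

open MeasureTheory Set

/-- Euclidean norm on `ℝ^n`. -/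
noncomputable def eNorm {n : ℕ} (a : Fin n → ℝ) : ℝ := Real.sqrt (∑ i, a i ^ 2)

lemma eNorm_eq_norm {n : ℕ} (a : Fin n → ℝ) : eNorm a = ‖WithLp.toLp 2 a‖ := by
  simp [eNorm, EuclideanSpace.norm_eq]

lemma dotp_self_eq_norm_sq {n : ℕ} (a : Fin n → ℝ) : dotp a a = ‖WithLp.toLp 2 a‖ ^ 2 := by
  rw [EuclideanSpace.norm_sq_eq]
  simp [dotp, pow_two]

/-- A function integrable on a half-line takes values below any positive `η` arbitrarily far out:
otherwise the constant `η` would be integrable on a set of infinite measure. -/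
lemma exists_ge_lt_of_integrableOn {G : ℝ → ℝ} (hG : IntegrableOn G (Ici 0)) {η : ℝ} (hη : 0 < η)
    {T : ℝ} (hT : 0 ≤ T) : ∃ t, T ≤ t ∧ G t < η := by
  by_contra! h
  have hc : IntegrableOn (fun _ : ℝ => η) (Ici T) := by
    refine Integrable.mono' (hG.mono_set (Ici_subset_Ici.2 hT)) aestronglyMeasurable_const ?_
    filter_upwards [ae_restrict_mem measurableSet_Ici] with t ht
    rw [Real.norm_of_nonneg hη.le]
    exact h t ht
  rw [integrableOn_const_iff] at hc
  simp [hη.ne'] at hc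

/-- An `M`-Lipschitz function on `[0,1]` with small `L²` norm is uniformly small. -/
lemma norm_le_of_integral_lt {E : Type*} [NormedAddCommGroup E] {M ε : ℝ} (hM : 0 < M)
    (hε : 0 < ε) {g : ℝ → E} (hg : ContinuousOn g (Icc 0 1))
    (hlip : ∀ x ∈ Icc (0:ℝ) 1, ∀ y ∈ Icc (0:ℝ) 1, ‖g y - g x‖ ≤ M * |y - x|)
    (hsmall : ∫ s in Icc (0:ℝ) 1, ‖g s‖ ^ 2 < min (ε / (2 * M)) (1 / 2) * (ε / 2) ^ 2) :
    ∀ s ∈ Icc (0:ℝ) 1, ‖g s‖ ≤ ε := by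
  intro s₀ hs₀
  by_contra! hlt
  set δ := min (ε / (2 * M)) (1 / 2) with hδ
  have hδ0 : 0 < δ := by positivity
  have hδM : M * δ ≤ ε / 2 := by
    calc M * δ ≤ M * (ε / (2 * M)) := by gcongr; exact min_le_left _ _
      _ = ε / 2 := by field_simp
  have hδ2 : δ ≤ 1 / 2 := min_le_right _ _
  -- Since `δ ≤ 1/2`, one of `[s₀, s₀ + δ]`, `[s₀ - δ, s₀]` lies in `[0,1]`.
  obtain ⟨a, ha0, ha1, ha⟩ : ∃ a, 0 ≤ a ∧ a + δ ≤ 1 ∧ ∀ s ∈ Icc a (a + δ), |s - s₀| ≤ δ := by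
    rcases le_total s₀ (1 / 2) with h | h
    · refine ⟨s₀, hs₀.1, by linarith, fun s hs => abs_le.2 ⟨?_, ?_⟩⟩ <;>
        linarith [hs.1, hs.2]
    · refine ⟨s₀ - δ, by linarith, by linarith [hs₀.2], fun s hs => abs_le.2 ⟨?_, ?_⟩⟩ <;>
        linarith [hs.1, hs.2]
  have hsub : Icc a (a + δ) ⊆ Icc (0:ℝ) 1 := Icc_subset_Icc ha0 ha1
  have hI : IntegrableOn (fun s => ‖g s‖ ^ 2) (Icc 0 1) :=
    (hg.norm.pow 2).integrableOn_compact isCompact_Icc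
  have hlow : ∀ s ∈ Icc a (a + δ), (ε / 2) ^ 2 ≤ ‖g s‖ ^ 2 := by
    intro s hs
    have h1 := hlip s (hsub hs) s₀ hs₀
    rw [abs_sub_comm] at h1
    have h2 : M * |s - s₀| ≤ M * δ := by gcongr; exact ha s hs
    have h3 := norm_sub_norm_le (g s₀) (g s)
    gcongr
    linarith
  have h1 : δ * (ε / 2) ^ 2 ≤ ∫ s in Icc a (a + δ), ‖g s‖ ^ 2 := by
    calc δ * (ε / 2) ^ 2 = ∫ _ in Icc a (a + δ), (ε / 2) ^ 2 := by
          simp [hδ0.le]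
      _ ≤ _ := setIntegral_mono_on (by simp) (hI.mono_set hsub) measurableSet_Icc hlow
  have h2 : ∫ s in Icc a (a + δ), ‖g s‖ ^ 2 ≤ ∫ s in Icc (0:ℝ) 1, ‖g s‖ ^ 2 :=
    setIntegral_mono_set hI (Filter.Eventually.of_forall fun s => by positivity)
      hsub.eventuallyLE
  linarith

/-- If `Φ : [0,1] × [0,∞) → ℝ^m` is continuous, differentiable in `s` with
`‖∂_s Φ‖ ≤ M`, and `∫₀^∞ ∫₀¹ ‖Φ(s,t)‖² ds dt < ∞`, then there is a sequence
`t_k → ∞` with `sup_{s∈[0,1]} ‖Φ(s,t_k)‖ → 0`. -/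
theorem stmt11 {m : ℕ} (M : ℝ) (hM : 0 < M)
    (Φ Φs : ℝ × ℝ → (Fin m → ℝ))
    (hΦ : ContinuousOn Φ (Set.Icc (0:ℝ) 1 ×ˢ Set.Ici (0:ℝ)))
    (hder : ∀ p ∈ Set.Icc (0:ℝ) 1 ×ˢ Set.Ici (0:ℝ),
      HasDerivWithinAt (fun s : ℝ => Φ (s, p.2)) (Φs p) (Set.Icc (0:ℝ) 1) p.1)
    (hbd : ∀ p ∈ Set.Icc (0:ℝ) 1 ×ˢ Set.Ici (0:ℝ), eNorm (Φs p) ≤ M)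
    (hint : IntegrableOn (fun p : ℝ × ℝ => dotp (Φ p) (Φ p))
      (Set.Icc (0:ℝ) 1 ×ˢ Set.Ici (0:ℝ))) :
    ∃ tk : ℕ → ℝ, Filter.Tendsto tk Filter.atTop Filter.atTop ∧
      Filter.Tendsto (fun j => ⨆ s ∈ Set.Icc (0:ℝ) 1, eNorm (Φ (s, tk j)))
        Filter.atTop (nhds 0) := by
  have hG : IntegrableOn (fun t => ∫ s in Icc (0:ℝ) 1, dotp (Φ (s, t)) (Φ (s, t))) (Ici 0) := by
    rw [IntegrableOn, Measure.volume_eq_prod, ← Measure.prod_restrict] at hint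
    exact hint.integral_prod_right
  have key : ∀ ε : ℝ, 0 < ε → ∀ T : ℝ, 0 ≤ T →
      ∃ t, T ≤ t ∧ ∀ s ∈ Icc (0:ℝ) 1, eNorm (Φ (s, t)) ≤ ε := by
    intro ε hε T hT
    obtain ⟨t, hTt, ht⟩ := exists_ge_lt_of_integrableOn hG
      (η := min (ε / (2 * M)) (1 / 2) * (ε / 2) ^ 2) (by positivity) hT
    refine ⟨t, hTt, ?_⟩
    have ht0 : (0:ℝ) ≤ t := hT.trans hTt
    have hd : ∀ s ∈ Icc (0:ℝ) 1, HasDerivWithinAt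
        (fun s : ℝ => (WithLp.toLp 2 (Φ (s, t)) : EuclideanSpace ℝ (Fin m)))
        (WithLp.toLp 2 (Φs (s, t))) (Icc 0 1) s := fun s hs =>
      ((PiLp.continuousLinearEquiv 2 ℝ (fun _ : Fin m => ℝ)).symm.toContinuousLinearMap.hasFDerivAt
        |>.comp_hasDerivWithinAt s (hder (s, t) ⟨hs, ht0⟩))
    simp only [eNorm_eq_norm, dotp_self_eq_norm_sq] at ht hbd ⊢
    refine norm_le_of_integral_lt hM hε (fun s hs => (hd s hs).continuousWithinAt) ?_ ht
    intro x hx y hy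
    exact Convex.norm_image_sub_le_of_norm_hasDerivWithin_le hd
      (fun s hs => hbd (s, t) ⟨hs, ht0⟩) (convex_Icc 0 1) hx hy
  choose tk htk hsup using fun k : ℕ => key (1 / ((k : ℝ) + 1)) (by positivity) k (by positivity)
  refine ⟨tk, Filter.tendsto_atTop_mono htk tendsto_natCast_atTop_atTop, ?_⟩
  refine squeeze_zero (fun j => ?_) (fun j => ?_) tendsto_one_div_add_atTop_nhds_zero_nat
  · exact Real.iSup_nonneg fun s => Real.iSup_nonneg fun _ => Real.sqrt_nonneg _
  · exact Real.iSup_le (fun s => Real.iSup_le (fun hs => hsup j s hs) (by positivity))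
      (by positivity)
end

section
/- Let f: ℝ × ℝ^m × ℝ^m → ℝ^m be continuously differentiable, and let x₁, x₂: ℝ → ℝ^m be twice continuously differentiable solutions of the second-order system ẍ(t) = f(t, x(t), ẋ(t)) for all t ∈ ℝ. If the set { t ∈ ℝ : x₁(t) = x₂(t) } has an accumulation point in ℝ, then x₁(t) = x₂(t) for all t ∈ ℝ. -/
/-!
At an accumulation point `t₀` of the coincidence set, the difference `x₁ - x₂` vanishes by
continuity, and its derivative vanishes too: a differentiable function with nonzero derivative at
`t₀` avoids any given value in a punctured neighbourhood of `t₀`. Hence the phase curves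
`(x₁, ẋ₁)` and `(x₂, ẋ₂)`, which solve the same first-order system with `C¹` right-hand side
`(t, (p, q)) ↦ (q, f (t, p, q))`, agree at `t₀`. Global uniqueness for such systems
(`eq_of_contDiff_ode`) then gives `x₁ = x₂`.
-/

open Filter Topology

/-- Global uniqueness for `y' = F(t, y)` with `F` of class `C¹`. Only local Lipschitz continuity of
`F` is available, so local uniqueness is propagated by connectedness of `ℝ`: the set of times at
which the two solutions agree is clopen. -/
theorem eq_of_contDiff_ode {E : Type*} [NormedAddCommGroup E] [NormedSpace ℝ E]
    (F : ℝ × E → E) (hF : ContDiff ℝ 1 F) (y z : ℝ → E)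
    (hy : ∀ t, HasDerivAt y (F (t, y t)) t) (hz : ∀ t, HasDerivAt z (F (t, z t)) t)
    (t₀ : ℝ) (h₀ : y t₀ = z t₀) : y = z := by
  have hyc : Continuous y := continuous_iff_continuousAt.2 fun t => (hy t).continuousAt
  have hzc : Continuous z := continuous_iff_continuousAt.2 fun t => (hz t).continuousAt
  have hopen : IsOpen {t | y t = z t} := by
    refine isOpen_iff_mem_nhds.2 fun t ht => ?_
    obtain ⟨K, U, hU, hK⟩ := (hF.contDiffAt (x := (t, y t))).exists_lipschitzOnWith
    have hyU : ∀ᶠ s in 𝓝 t, (s, y s) ∈ U :=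
      (continuous_id.prodMk hyc).continuousAt.eventually_mem hU
    have hzU : ∀ᶠ s in 𝓝 t, (s, z s) ∈ U := by
      refine (continuous_id.prodMk hzc).continuousAt.eventually_mem ?_
      rw [Set.mem_ofPred_eq] at ht
      simpa [ht] using hU
    -- The time-dependent domain of uniqueness is the slice of `U` at time `s`.
    refine ODE_solution_unique_of_eventually (K := K) (v := fun s p => F (s, p))
      (s := fun s => {p | (s, p) ∈ U}) (.of_forall fun s => ?_)
      (hyU.mono fun s hs => ⟨hy s, hs⟩) (hzU.mono fun s hs => ⟨hz s, hs⟩) ht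
    intro p hp q hq
    simpa [Prod.edist_eq] using hK hp hq
  have huniv : {t | y t = z t} = Set.univ :=
    IsClopen.eq_univ ⟨isClosed_eq hyc hzc, hopen⟩ ⟨t₀, h₀⟩
  funext t
  exact (Set.eq_univ_iff_forall.1 huniv) t

/-- Two `C²` solutions of `ẍ = f(t,x,ẋ)` with `f` continuously differentiable that
agree on a set with an accumulation point agree everywhere. -/
theorem stmt12 {m : ℕ} (f : ℝ × (Fin m → ℝ) × (Fin m → ℝ) → (Fin m → ℝ))
    (hf : ContDiff ℝ 1 f)
    (x₁ x₂ : ℝ → (Fin m → ℝ)) (hx₁ : ContDiff ℝ 2 x₁) (hx₂ : ContDiff ℝ 2 x₂)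
    (hsol₁ : ∀ t : ℝ, deriv (deriv x₁) t = f (t, x₁ t, deriv x₁ t))
    (hsol₂ : ∀ t : ℝ, deriv (deriv x₂) t = f (t, x₂ t, deriv x₂ t))
    (hacc : ∃ t₀ : ℝ, AccPt t₀ (Filter.principal {t : ℝ | x₁ t = x₂ t})) :
    ∀ t : ℝ, x₁ t = x₂ t := by
  obtain ⟨t₀, hacc⟩ := hacc
  have hd : ∀ x : ℝ → (Fin m → ℝ), ContDiff ℝ 2 x → ∀ t, HasDerivAt x (deriv x t) t :=
    fun x hx t => (hx.differentiable (by norm_num) t).hasDerivAt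
  have hdd : ∀ x : ℝ → (Fin m → ℝ), ContDiff ℝ 2 x →
      ∀ t, HasDerivAt (deriv x) (deriv (deriv x) t) t := fun x hx t =>
    ((contDiff_succ_iff_deriv (n := 1).1 hx).2.2.differentiable (by norm_num) t).hasDerivAt
  have hfreq := accPt_iff_frequently_nhdsNE.1 hacc
  have h0 : x₁ t₀ = x₂ t₀ :=
    (isClosed_eq hx₁.continuous hx₂.continuous).closure_subset
      (mem_closure_iff_clusterPt.2 hacc.clusterPt)
  have h1 : deriv x₁ t₀ = deriv x₂ t₀ := by
    by_contra hne
    have hev := ((hd x₁ hx₁ t₀).sub (hd x₂ hx₂ t₀)).eventually_ne (c := 0) (sub_ne_zero.2 hne)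
    exact hfreq (hev.mono fun t ht h => ht (sub_eq_zero.2 h))
  have key := eq_of_contDiff_ode (fun p : ℝ × (Fin m → ℝ) × (Fin m → ℝ) => (p.2.2, f p))
    ((contDiff_snd.comp contDiff_snd).prodMk hf)
    (fun t => (x₁ t, deriv x₁ t)) (fun t => (x₂ t, deriv x₂ t))
    (fun t => (hd x₁ hx₁ t).prodMk (hsol₁ t ▸ hdd x₁ hx₁ t))
    (fun t => (hd x₂ hx₂ t).prodMk (hsol₂ t ▸ hdd x₂ hx₂ t))
    t₀ (Prod.ext h0 h1)
  exact fun t => congrArg Prod.fst (congrFun key t)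
end
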